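/- Let A be a C*-algebra admitting an AF presentation that has the Fermion property. Then A is isomorphic as a Banach space to C₀(ℕ, A). -/

import Mathlib

/-!
Statement 4.

A C*-algebra with an AF presentation having the Fermion property is isomorphic
as a Banach space to `C₀(ℕ, A)`, the space of sequences in `A` vanishing at
infinity with the supremum norm.
-/

/-- `S` is an AF presentation of the C*-algebra `A`: an increasing sequence of
finite-dimensional *-subalgebras whose union is dense. -/
def IsAFPresentation (A : Type*) [NonUnitalCStarAlgebra A]
    (S : ℕ → NonUnitalStarSubalgebra ℂ A) : Prop :=
  Monotone S ∧ (∀ k, FiniteDimensional ℂ (S k)) ∧ Dense (⋃ k, (S k : Set A))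

/-- The presentation `S` has the Fermion property: there are indices
`n 0 < n 1 < ⋯` and nonzero minimal central projections `p k` of `S (n k)` such
that for every minimal projection `e` of the corner `p k • S (n k) • p k`,
the projection `p (k+1) * e` is nonzero and is not a minimal projection of
`S (n (k+1))`. -/
def HasFermionProperty (A : Type*) [NonUnitalCStarAlgebra A]
    (S : ℕ → NonUnitalStarSubalgebra ℂ A) : Prop :=
  ∃ (n : ℕ → ℕ) (p : ℕ → A),
    StrictMono n ∧
    (∀ k, p k ∈ S (n k)) ∧
    (∀ k, p k * p k = p k ∧ star (p k) = p k) ∧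
    (∀ k, p k ≠ 0) ∧
    -- `p k` is central in `S (n k)`
    (∀ k, ∀ a ∈ S (n k), p k * a = a * p k) ∧
    -- `p k` is minimal among the central projections of `S (n k)`
    (∀ k, ∀ q ∈ S (n k), (q * q = q ∧ star q = q) → (∀ a ∈ S (n k), q * a = a * q) →
      q * p k = q → q ≠ 0 → q = p k) ∧
    -- every minimal projection `e` of the corner `p k * S (n k) * p k` meets the
    -- next summand with multiplicity at least two
    (∀ k, ∀ e ∈ S (n k), (e * e = e ∧ star e = e) → e ≠ 0 → e * p k = e →
      (∀ a ∈ S (n k), ∃ c : ℂ, e * a * e = c • e) →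
      (p (k + 1) * e ≠ 0 ∧
        ∃ q ∈ S (n (k + 1)), (q * q = q ∧ star q = q) ∧ q ≠ 0 ∧
          q * (p (k + 1) * e) = q ∧ (p (k + 1) * e) * q = q ∧ q ≠ p (k + 1) * e))


namespace Ferm

section basic
variable {A : Type*} [NonUnitalCStarAlgebra A]

/-- minimal projections of a star subalgebra. -/
structure IsMinProj (D : NonUnitalStarSubalgebra ℂ A) (f : A) : Prop where
  mem : f ∈ D
  idem : f * f = f
  sa : star f = f
  ne : f ≠ 0
  min : ∀ a ∈ D, ∃ c : ℂ, f * a * f = c • f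

theorem star_mul_self_ne {y : A} (h : y ≠ 0) : star y * y ≠ 0 := by
  simpa [CStarRing.star_mul_self_eq_zero_iff] using h

theorem mul_star_self_ne {y : A} (h : y ≠ 0) : y * star y ≠ 0 := by
  simpa [CStarRing.mul_star_self_eq_zero_iff] using h

theorem sa_mul_self_ne {y : A} (hs : star y = y) (h : y ≠ 0) : y * y ≠ 0 := by
  have := star_mul_self_ne h
  rwa [hs] at this

/-- `x D x` -/
def W (D : NonUnitalStarSubalgebra ℂ A) (x : A) : Submodule ℂ A :=
  D.toSubmodule.map ((LinearMap.mulLeft ℂ x).comp (LinearMap.mulRight ℂ x))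

theorem mem_W {D : NonUnitalStarSubalgebra ℂ A} {x y : A} :
    y ∈ W D x ↔ ∃ a ∈ D, x * a * x = y := by
  simp only [W, Submodule.mem_map, LinearMap.comp_apply, LinearMap.mulLeft_apply,
    LinearMap.mulRight_apply, mul_assoc]
  rfl

theorem exists_minProj (D : NonUnitalStarSubalgebra ℂ A) [FiniteDimensional ℂ D] {x0 : A}
    (hx0 : x0 ∈ D) (hsx0 : star x0 = x0) (hne : x0 ≠ 0) :
    ∃ f, IsMinProj D f ∧ ∃ a ∈ D, f = x0 * a * x0 := by
  have hWD : ∀ x ∈ D, W D x ≤ D.toSubmodule := by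
    intro x hx y hy
    obtain ⟨a, ha, rfl⟩ := mem_W.1 hy
    exact (mul_mem (mul_mem hx ha) hx : x * a * x ∈ D)
  have hfd : FiniteDimensional ℂ D.toSubmodule := ‹FiniteDimensional ℂ D›
  let P : Set A := {x | star x = x ∧ x ≠ 0 ∧ ∃ a ∈ D, x = x0 * a * x0}
  have hcube : ∀ x : A, star x = x → x ≠ 0 → x * x * x ≠ 0 := by
    intro x hs hx h
    have h1 : (x * x) * (x * x) ≠ 0 := sa_mul_self_ne (by simp [hs]) (sa_mul_self_ne hs hx)
    apply h1
    rw [← mul_assoc, h, zero_mul]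
  have hPne : P.Nonempty := ⟨x0 * x0 * x0, by simp [hsx0, mul_assoc], hcube _ hsx0 hne, x0, hx0, rfl⟩
  obtain ⟨x, ⟨hsx, hxne, a0, ha0, hxa⟩, hmin⟩ :=
    (measure fun x : A => Module.finrank ℂ (W D x)).wf.has_min P hPne
  have hxD : x ∈ D := by rw [hxa]; exact mul_mem (mul_mem hx0 ha0) hx0
  have hWfd : FiniteDimensional ℂ (W D x) := Submodule.finiteDimensional_of_le (hWD x hxD)
  have hWmul : ∀ y ∈ W D x, ∀ z ∈ W D x, y * z ∈ W D x := by
    intro y hy z hz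
    obtain ⟨a, ha, rfl⟩ := mem_W.1 hy
    obtain ⟨b, hb, rfl⟩ := mem_W.1 hz
    exact mem_W.2 ⟨a * x * x * b, mul_mem (mul_mem (mul_mem ha hxD) hxD) hb, by simp only [mul_assoc]⟩
  have hWstar : ∀ y ∈ W D x, star y ∈ W D x := by
    intro y hy
    obtain ⟨a, ha, rfl⟩ := mem_W.1 hy
    exact mem_W.2 ⟨star a, star_mem ha, by simp [hsx, mul_assoc]⟩
  have hW0 : ∀ y ∈ W D x, ∃ a ∈ D, y = x0 * a * x0 := by
    intro y hy
    obtain ⟨a, ha, rfl⟩ := mem_W.1 hy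
    refine ⟨a0 * x0 * a * x0 * a0, ?_, ?_⟩
    · exact mul_mem (mul_mem (mul_mem (mul_mem ha0 hx0) ha) hx0) ha0
    · conv_lhs => rw [hxa]
      simp only [mul_assoc]
  have hWeq : ∀ y ∈ W D x, star y = y → y ≠ 0 → W D y = W D x := by
    intro y hy hs hn
    have hle : W D y ≤ W D x := by
      intro z hz
      obtain ⟨b, hb, rfl⟩ := mem_W.1 hz
      obtain ⟨a, ha, rfl⟩ := mem_W.1 hy
      exact mem_W.2 ⟨a * x * b * x * a, mul_mem (mul_mem (mul_mem (mul_mem ha hxD) hb) hxD) ha,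
        by simp only [mul_assoc]⟩
    apply Submodule.eq_of_le_of_finrank_le hle
    have := hmin y ⟨hs, hn, hW0 y hy⟩
    exact not_lt.1 this
  have hcanc1 : ∀ y ∈ W D x, star y = y → y ≠ 0 → ∀ z ∈ W D x, y * z = 0 → z = 0 := by
    intro y hy hs hn z hz h
    by_contra hz0
    have h1 := hWeq (z * star z) (hWmul _ hz _ (hWstar _ hz)) (by simp) (mul_star_self_ne hz0)
    rw [← h1] at hy
    obtain ⟨a, ha, h2⟩ := mem_W.1 hy
    apply sa_mul_self_ne hs hn
    conv_lhs => rw [← h2]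
    rw [h2]
    conv_lhs => rw [← h2]
    have : y * (z * star z * a * (z * star z)) = (y * z) * (star z * a * (z * star z)) := by
      simp only [mul_assoc]
    have h3 : y * y = 0 := by
      conv_lhs => rw [← h2]
      rw [h2]
      conv_lhs => enter [2]; rw [← h2]
      rw [this, h, zero_mul]
    rw [h2, h3]
  have hcanc : ∀ y ∈ W D x, y ≠ 0 → ∀ z ∈ W D x, y * z = 0 → z = 0 := by
    intro y hy hn z hz h
    apply hcanc1 (star y * y) (hWmul _ (hWstar _ hy) _ hy) (by simp) (star_mul_self_ne hn) z hz
    rw [mul_assoc, h, mul_zero]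
  let L : ∀ w ∈ W D x, (W D x →ₗ[ℂ] W D x) := fun w hw =>
    (LinearMap.mulLeft ℂ w).restrict (fun z hz => hWmul w hw z hz)
  have hLapp : ∀ w hw z, ((L w hw z : W D x) : A) = w * z := fun w hw z => rfl
  have hy0 : x * x * x ∈ W D x := mem_W.2 ⟨x, hxD, rfl⟩
  have hy0n := hcube x hsx hxne
  set y0 := x * x * x with hy0def
  have hinj : Function.Injective (L y0 hy0) := by
    rw [← LinearMap.ker_eq_bot, LinearMap.ker_eq_bot']
    intro m hm
    have := congrArg Subtype.val hm
    rw [hLapp y0 hy0] at this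
    exact Subtype.ext (hcanc y0 hy0 hy0n m m.2 this)
  obtain ⟨⟨f, hfW⟩, hf⟩ := (LinearMap.injective_iff_surjective.1 hinj) ⟨y0, hy0⟩
  replace hf : y0 * f = y0 := congrArg Subtype.val hf
  have hunit : ∀ w ∈ W D x, f * w = w := by
    intro w hw
    have := hcanc y0 hy0 hy0n (f * w - w) (sub_mem (hWmul _ hfW _ hw) hw)
      (by rw [mul_sub, ← mul_assoc, hf, sub_self])
    exact sub_eq_zero.1 this
  have hfs : star f = f := by
    have h1 := hunit (star f) (hWstar _ hfW)
    have h2 := congrArg star h1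
    rw [star_mul, star_star, h1] at h2
    exact h2
  have hfne : f ≠ 0 := by
    rintro rfl
    exact hy0n (by rw [← hf, mul_zero])
  refine ⟨f, ⟨hWD x hxD hfW, hunit f hfW, hfs, hfne, ?_⟩, hW0 f hfW⟩
  intro a ha
  have hw : f * a * f ∈ W D x := by
    obtain ⟨b, hb, h⟩ := mem_W.1 hfW
    rw [← h]
    exact mem_W.2 ⟨b * x * a * x * b, mul_mem (mul_mem (mul_mem (mul_mem hb hxD) ha) hxD) hb,
        by simp only [mul_assoc]⟩
  have : Nontrivial (W D x) := ⟨⟨⟨f, hfW⟩, 0, fun h => hfne (congrArg Subtype.val h)⟩⟩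
  obtain ⟨c, hc⟩ := Module.End.exists_eigenvalue (L (f * a * f) hw)
  obtain ⟨y, hy⟩ := hc.exists_hasEigenvector
  refine ⟨c, ?_⟩
  have h1 := hy.apply_eq_smul
  replace h1 : f * a * f * y = c • (y : A) := congrArg Subtype.val h1
  have hyne : (y : A) ≠ 0 := fun h => hy.2 (Subtype.ext h)
  by_contra hne'
  have := hcanc (f * a * f - c • f) (sub_mem hw ((W D x).smul_mem c hfW)) (sub_ne_zero.2 hne') y y.2
    (by rw [sub_mul, h1, smul_mul_assoc, hunit y y.2, sub_self])
  exact hyne this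

theorem exists_normalize {g y : A} (hg : g * g = g) (hgs : star g = g) (hy : y ≠ 0) {c : ℂ}
    (h : star y * y = c • g) : ∃ d : ℂ, d ≠ 0 ∧ star (d • y) * (d • y) = g := by
  have hgne : g ≠ 0 := by
    rintro rfl
    exact star_mul_self_ne hy (by simp [h])
  have hc0 : c ≠ 0 := by
    rintro rfl
    exact star_mul_self_ne hy (by simp [h])
  have hcr : star c = c := by
    have h1 := congrArg star h
    rw [star_mul, star_star, star_smul, hgs, h] at h1
    have h2 : (c - star c) • g = 0 := by rw [sub_smul, ← h1, sub_self]
    rcases smul_eq_zero.1 h2 with h3 | h3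
    · exact (sub_eq_zero.1 h3).symm
    · exact absurd h3 hgne
  obtain ⟨r, rfl⟩ : ∃ r : ℝ, (r : ℂ) = c := Complex.conj_eq_iff_real.1 hcr |>.imp fun _ h => h.symm
  have hr0 : r ≠ 0 := fun h => hc0 (by simp [h])
  have hr : 0 < r := by
    by_contra hneg
    have hneg' : 0 < -r := by
      rcases lt_trichotomy r 0 with h | h | h
      · linarith
      · exact absurd h hr0
      · exact absurd h hneg
    let _ := CStarAlgebra.spectralOrder A
    have := CStarAlgebra.spectralOrderedRing A
    have h1 : 0 ≤ star y * y := star_mul_self_nonneg y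
    have h2 : 0 ≤ star ((((Real.sqrt (-r) : ℝ)) : ℂ) • g) * ((((Real.sqrt (-r) : ℝ)) : ℂ) • g) :=
      star_mul_self_nonneg _
    have h3 : star ((((Real.sqrt (-r) : ℝ)) : ℂ) • g) * ((((Real.sqrt (-r) : ℝ)) : ℂ) • g)
        = - (star y * y) := by
      rw [h, star_smul, hgs, smul_mul_smul_comm, hg, ← neg_smul]
      congr 1
      have := Real.mul_self_sqrt hneg'.le
      simp only [Complex.star_def, Complex.conj_ofReal]
      exact_mod_cast this
    rw [h3] at h2
    exact star_mul_self_ne hy (le_antisymm (neg_nonneg.1 h2) h1)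
  refine ⟨((Real.sqrt r)⁻¹ : ℝ), ?_, ?_⟩
  · simp [Real.sqrt_ne_zero'.2 hr]
  · rw [star_smul, smul_mul_smul_comm, h, smul_smul]
    have : (star (((Real.sqrt r)⁻¹ : ℝ) : ℂ) * (((Real.sqrt r)⁻¹ : ℝ) : ℂ) * (r : ℂ)) = 1 := by
      simp only [Complex.star_def, Complex.conj_ofReal]
      have h4 := Real.mul_self_sqrt hr.le
      have h5 := Real.sqrt_ne_zero'.2 hr
      have : (Real.sqrt r)⁻¹ * (Real.sqrt r)⁻¹ * r = 1 := by
        field_simp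
        nlinarith
      exact_mod_cast this
    rw [this, one_smul]

theorem mul_proj_of_star_mul_self {g y : A} (hg : g * g = g) (hgs : star g = g)
    (h : star y * y = g) : y * g = y := by
  have : star (y * g - y) * (y * g - y) = 0 := by
    have e1 : star (y * g - y) * (y * g - y)
      = g * (star y * y) * g - g * (star y * y) - (star y * y) * g + star y * y := by
      simp only [star_sub, star_mul, hgs]
      noncomm_ring
    rw [e1, h, hg, hg]; simp
  exact sub_eq_zero.1 ((CStarRing.star_mul_self_eq_zero_iff _).1 this)



theorem IsMinProj.sandwich {D : NonUnitalStarSubalgebra ℂ A} {g : A} (hg : IsMinProj D g)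
    {z z' x : A} (hz : z ∈ D) (hz' : z' ∈ D) (hx : x ∈ D) (h : z * g = z) (h' : z' * g = z') :
    ∃ c : ℂ, star z * x * z' = c • g := by
  obtain ⟨c, hc⟩ := hg.min (star z * x * z') (mul_mem (mul_mem (star_mem hz) hx) hz')
  refine ⟨c, ?_⟩
  rw [← hc]
  have e : g * star z = star z := by
    have := congrArg star h
    rwa [star_mul, hg.sa] at this
  rw [← mul_assoc, ← mul_assoc, e, mul_assoc _ z' g, h']

theorem IsMinProj.sandwich' {D : NonUnitalStarSubalgebra ℂ A} {g : A} (hg : IsMinProj D g)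
    {z z' : A} (hz : z ∈ D) (hz' : z' ∈ D) (h : z * g = z) (h' : z' * g = z') :
    ∃ c : ℂ, star z * z' = c • g := by
  obtain ⟨c, hc⟩ := hg.min (star z * z') (mul_mem (star_mem hz) hz')
  refine ⟨c, ?_⟩
  rw [← hc]
  have e : g * star z = star z := by
    have := congrArg star h
    rwa [star_mul, hg.sa] at this
  rw [← mul_assoc, e, mul_assoc _ z' g, h']

/-- orthogonal system of partial isometries in `D` subordinate to the projections `g i`. -/
structure Fr (D : NonUnitalStarSubalgebra ℂ A) {ι : Type*} (g : ι → A) {n : ℕ} (y : Fin n → A)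
    (b : Fin n → ι) : Prop where
  mem : ∀ α, y α ∈ D
  sub : ∀ α, g (b α) * y α = y α
  min : ∀ α, IsMinProj D (star (y α) * y α)
  orth : ∀ α β, α ≠ β → star (y α) * y β = 0
  dich : ∀ α β, star (y α) * y α = star (y β) * y β ∨ ∀ a ∈ D, star (y α) * a * y β = 0

theorem Fr.cons {D : NonUnitalStarSubalgebra ℂ A} {ι : Type*} {g : ι → A} {n : ℕ} {y : Fin n → A}
    {b : Fin n → ι} (h : Fr D g y b) {y0 : A} {i : ι} (h1 : y0 ∈ D) (h2 : g i * y0 = y0)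
    (h3 : IsMinProj D (star y0 * y0)) (h4 : ∀ α, star (y α) * y0 = 0)
    (h5 : ∀ α, star (y α) * y α = star y0 * y0 ∨ ∀ a ∈ D, star (y α) * a * y0 = 0) :
    Fr D g (Fin.cons y0 y : Fin (n + 1) → A) (Fin.cons i b : Fin (n + 1) → ι) where
  mem := Fin.cases h1 h.mem
  sub := Fin.cases h2 h.sub
  min := Fin.cases h3 h.min
  orth := by
    refine Fin.cases (Fin.cases (by simp) ?_) (fun α => Fin.cases ?_ ?_)
    · intro β _
      have := congrArg star (h4 β)
      simpa using this
    · intro _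
      simpa using h4 α
    · intro β hne
      simpa using h.orth α β (fun h => hne (by rw [h]))
  dich := by
    refine Fin.cases (Fin.cases (Or.inl rfl) ?_) (fun α => Fin.cases ?_ ?_)
    · intro β
      rcases h5 β with h6 | h6
      · left; simpa using h6.symm
      · right
        intro a ha
        have := congrArg star (h6 (star a) (star_mem ha))
        simpa [mul_assoc] using this
    · simpa using h5 α
    · intro β
      simpa using h.dich α β

theorem Fr.le_finrank {D : NonUnitalStarSubalgebra ℂ A} [FiniteDimensional ℂ D]
    {ι : Type*} {g : ι → A} {n : ℕ} {y : Fin n → A}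
    {b : Fin n → ι} (h : Fr D g y b) : n ≤ Module.finrank ℂ D := by
  let z : Fin n → D := fun α => ⟨y α, h.mem α⟩
  have hli : LinearIndependent ℂ z := by
    rw [Fintype.linearIndependent_iff]
    intro c hc α
    have h1 : ∑ β, c β • y β = 0 := by
      have := congrArg Subtype.val hc
      simpa [z] using this
    have h2 := congrArg (fun x => star (y α) * x) h1
    simp only [Finset.mul_sum, mul_smul_comm, mul_zero] at h2
    rw [Finset.sum_eq_single α] at h2
    · exact (smul_eq_zero.1 h2).resolve_right (h.min α).ne
    · intro β _ hne
      rw [h.orth α β hne.symm, smul_zero]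
    · simp
  simpa using hli.fintype_card_le_finrank

theorem exists_frame (D : NonUnitalStarSubalgebra ℂ A) [FiniteDimensional ℂ D] {ι : Type*}
    [DecidableEq ι] (g : ι → A) (hgD : ∀ i, g i ∈ D) (hgi : ∀ i, g i * g i = g i)
    (hgs : ∀ i, star (g i) = g i) (hgo : ∀ i j, i ≠ j → g i * g j = 0) :
    ∃ (n : ℕ) (y : Fin n → A) (b : Fin n → ι), Fr D g y b ∧
      ∀ i, ∑ α with b α = i, y α * star (y α) = g i := by
  by_contra hcon
  push Not at hcon
  have hstep : ∀ n (y : Fin n → A) (b : Fin n → ι), Fr D g y b →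
      ∃ (y' : Fin (n+1) → A) (b' : Fin (n+1) → ι), Fr D g y' b' := by
    intro n y b h
    obtain ⟨i, hi⟩ := hcon n y b h
    set h0 := g i - ∑ α with b α = i, y α * star (y α) with hh0
    have hne : h0 ≠ 0 := sub_ne_zero.2 (Ne.symm hi)
    have hmem : h0 ∈ D := sub_mem (hgD i) (sum_mem fun α _ => mul_mem (h.mem α) (star_mem (h.mem α)))
    have hsa : star h0 = h0 := by simp [hh0, hgs]
    have hsub' : ∀ α, star (y α) * g (b α) = star (y α) := by
      intro α
      have := congrArg star (h.sub α)
      simpa [hgs] using this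
    have hnorm : ∀ α, y α * (star (y α) * y α) = y α := fun α =>
      mul_proj_of_star_mul_self (h.min α).idem (h.min α).sa rfl
    have hnorm' : ∀ α, (star (y α) * y α) * star (y α) = star (y α) := fun α => by
      have := congrArg star (hnorm α)
      simpa [mul_assoc] using this
    have hgh : g i * h0 = h0 := by
      rw [hh0, mul_sub, hgi, Finset.mul_sum]
      congr 1
      apply Finset.sum_congr rfl
      intro α hα
      rw [← mul_assoc, ← (Finset.mem_filter.1 hα).2, h.sub]
    have hyh : ∀ α, star (y α) * h0 = 0 := by
      intro α
      rw [hh0, mul_sub, Finset.mul_sum]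
      by_cases hb : b α = i
      · rw [Finset.sum_eq_single α]
        · rw [← hb, hsub', ← mul_assoc, hnorm', sub_self]
        · intro β _ hne
          rw [← mul_assoc, h.orth α β hne.symm, zero_mul]
        · intro hn
          exact absurd (Finset.mem_filter.2 ⟨Finset.mem_univ α, hb⟩) hn
      · rw [Finset.sum_eq_zero, ← hsub', mul_assoc, hgo _ _ hb]
        · simp
        · intro β hβ
          rw [← mul_assoc, h.orth α β, zero_mul]
          rintro rfl
          exact hb (Finset.mem_filter.1 hβ).2
    obtain ⟨f, hf, a, ha, hfa⟩ := exists_minProj D hmem hsa hne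
    have hgf : g i * f = f := by
      rw [hfa, mul_assoc, ← mul_assoc, hgh]
    have hyf : ∀ α, star (y α) * f = 0 := by
      intro α
      rw [hfa, mul_assoc, ← mul_assoc, hyh, zero_mul]
    by_cases hcase : ∀ α, ∀ d ∈ D, f * d * y α = 0
    · refine ⟨_, _, h.cons (y0 := f) (i := i) hf.mem hgf ?_ hyf ?_⟩
      · rw [hf.sa, hf.idem]; exact hf
      · intro α
        right
        intro d hd
        have := congrArg star (hcase α (star d) (star_mem hd))
        simpa [mul_assoc, hf.sa] using this
    · push Not at hcase
      obtain ⟨α, d, hd, hne2⟩ := hcase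
      have hz : f * d * y α * (star (y α) * y α) = f * d * y α := by
        rw [mul_assoc, hnorm]
      have hzD : f * d * y α ∈ D := mul_mem (mul_mem hf.mem hd) (h.mem α)
      obtain ⟨c, hc'⟩ := (h.min α).sandwich' hzD hzD hz hz
      obtain ⟨k, hk, hk2⟩ := exists_normalize (h.min α).idem (h.min α).sa hne2 hc'
      refine ⟨_, _, h.cons (y0 := k • (f * d * y α)) (i := i) ?_ ?_ ?_ ?_ ?_⟩
      · exact SMulMemClass.smul_mem _ (mul_mem (mul_mem hf.mem hd) (h.mem α))
      · rw [mul_smul_comm, ← mul_assoc, ← mul_assoc, hgf]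
      · rw [hk2]; exact h.min α
      · intro β
        rw [mul_smul_comm, ← mul_assoc, ← mul_assoc, hyf]; simp
      · intro β
        rw [hk2]
        rcases h.dich β α with h6 | h6
        · exact Or.inl h6
        · right
          intro e he
          have := h6 (e * f * d) (mul_mem (mul_mem he hf.mem) hd)
          rw [mul_smul_comm]
          simp only [mul_assoc] at this ⊢
          rw [this, smul_zero]
  have hall : ∀ n, ∃ (y : Fin n → A) (b : Fin n → ι), Fr D g y b := by
    intro n
    induction n with
    | zero => exact ⟨Fin.elim0, Fin.elim0, ⟨fun α => α.elim0, fun α => α.elim0, fun α => α.elim0,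
        fun α => α.elim0, fun α => α.elim0⟩⟩
    | succ n ih =>
      obtain ⟨y, b, h⟩ := ih
      exact hstep n y b h
  obtain ⟨y, b, h⟩ := hall (Module.finrank ℂ D + 1)
  have := h.le_finrank
  omega


theorem connect (D : NonUnitalStarSubalgebra ℂ A) [FiniteDimensional ℂ D] {p : A} (hpD : p ∈ D)
    (hpi : p * p = p) (hps : star p = p) (hpc : ∀ a ∈ D, p * a = a * p)
    (hpm : ∀ q ∈ D, (q * q = q ∧ star q = q) → (∀ a ∈ D, q * a = a * q) →
      q * p = q → q ≠ 0 → q = p) {q q' : A} (hq : q ∈ D) (hqs : star q = q) (hq0 : q ≠ 0)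
    (hqp : q * p = q) (hq' : q' ∈ D) (hq0' : q' ≠ 0) (hqp' : q' * p = q') :
    ∃ d ∈ D, q * d * q' ≠ 0 := by
  by_contra hcon
  push Not at hcon
  obtain ⟨n, u, b, hF, hsum⟩ := exists_frame D (fun _ : Unit => p) (fun _ => hpD) (fun _ => hpi)
    (fun _ => hps) (fun i j h => absurd (Subsingleton.elim i j) h)
  replace hsum : ∑ α, u α * star (u α) = p := by
    have := hsum ()
    simpa using this
  classical
  let Z : Finset (Fin n) := Finset.univ.filter (fun t => ∃ d ∈ D, q * d * u t ≠ 0)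
  have hZ : ∀ t, t ∈ Z ↔ ∃ d ∈ D, q * d * u t ≠ 0 := fun t => by simp [Z]
  let z := ∑ t ∈ Z, u t * star (u t)
  have hnorm : ∀ α, u α * (star (u α) * u α) = u α := fun α =>
      mul_proj_of_star_mul_self (hF.min α).idem (hF.min α).sa rfl
  have hzD : z ∈ D := sum_mem fun α _ => mul_mem (hF.mem α) (star_mem (hF.mem α))
  have hzs : star z = z := by simp [z]
  have hzz : z * z = z := by
    simp only [z, Finset.sum_mul]
    apply Finset.sum_congr rfl
    intro s hs
    rw [Finset.mul_sum, Finset.sum_eq_single s]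
    · rw [← mul_assoc, mul_assoc (u s), hnorm]
    · intro t _ hne
      rw [← mul_assoc, mul_assoc (u s), hF.orth s t hne.symm]; simp
    · exact fun h => absurd hs h
  have hpu : ∀ α, p * u α = u α := fun α => hF.sub α
  have hup : ∀ α, star (u α) * p = star (u α) := fun α => by
    have := congrArg star (hpu α)
    rwa [star_mul, hps] at this
  have hzp : z * p = z := by
    simp only [z, Finset.sum_mul]
    exact Finset.sum_congr rfl fun s _ => by rw [mul_assoc, hup]
  have hpz : p * z = z := by rw [hpc z hzD, hzp]
  have hzazl : ∀ a ∈ D, z * a = z * a * z := by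
    intro a ha
    have h1 : z * a * p = z * a := by rw [mul_assoc, ← hpc a ha, ← mul_assoc, hzp]
    rw [← h1]
    conv_lhs => rw [← hsum]
    rw [h1, Finset.mul_sum]
    simp only [z]
    rw [Finset.mul_sum, eq_comm]
    apply Finset.sum_subset (Finset.subset_univ _)
    intro t _ ht
    rw [Finset.sum_mul, Finset.sum_mul]
    apply Finset.sum_eq_zero
    intro s hs
    have : star (u s) * a * u t = 0 := by
      rcases hF.dich s t with h | h
      · by_contra hne
        obtain ⟨d, hd, hds⟩ := (hZ s).1 hs
        apply ht
        refine (hZ t).2 ⟨d * u s * star (u s) * a, ?_, ?_⟩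
        · exact mul_mem (mul_mem (mul_mem hd (hF.mem s)) (star_mem (hF.mem s))) ha
        · have hut : u t * (star (u s) * u s) = u t := by rw [h, hnorm]
          obtain ⟨c, hc⟩ := (hF.min s).sandwich (hF.mem s) (hF.mem t) ha (hnorm s) hut
          have hc0 : c ≠ 0 := by
            rintro rfl
            exact hne (by rw [hc, zero_smul])
          have : q * (d * u s * star (u s) * a) * u t = c • (q * d * u s) := by
            calc q * (d * u s * star (u s) * a) * u t
                = q * d * (u s * (star (u s) * a * u t)) := by simp only [mul_assoc]
              _ = _ := by rw [hc, mul_smul_comm, hnorm, mul_smul_comm]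
          rw [this]
          exact smul_ne_zero hc0 hds
      · exact h a ha
    calc u s * star (u s) * a * (u t * star (u t))
        = u s * (star (u s) * a * u t) * star (u t) := by simp only [mul_assoc]
      _ = 0 := by rw [this]; simp
  have hzc : ∀ a ∈ D, z * a = a * z := by
    intro a ha
    have h2 := congrArg star (hzazl (star a) (star_mem ha))
    simp only [star_mul, star_star, hzs] at h2
    rw [hzazl a ha, h2, mul_assoc]
  have hzq : z * q = q := by
    have h1 : p * q = q := by rw [hpc q hq, hqp]
    conv_rhs => rw [← h1, ← hsum, Finset.sum_mul]
    simp only [z, Finset.sum_mul]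
    apply Finset.sum_subset (Finset.subset_univ _)
    intro t _ ht
    by_contra hne
    apply ht
    refine (hZ t).2 ⟨q, hq, ?_⟩
    intro h0
    have h3 : q * u t = 0 := by
      by_contra h4
      have h5 : star (u t) * (q * q) = 0 := by
        have := congrArg star h0
        simpa [hqs] using this
      have h6 : star (q * u t) * (q * u t) = 0 := by
        rw [star_mul, hqs, ← mul_assoc, mul_assoc (star (u t)), h5, zero_mul]
      exact star_mul_self_ne h4 h6
    have h4 : star (u t) * q = 0 := by
      have := congrArg star h3
      simpa [hqs] using this
    exact hne (by rw [mul_assoc, h4, mul_zero])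
  have hzq' : z * q' = 0 := by
    simp only [z, Finset.sum_mul]
    apply Finset.sum_eq_zero
    intro t ht
    obtain ⟨d, hd, hdt⟩ := (hZ t).1 ht
    have hv : q * d * u t * (star (u t) * u t) = q * d * u t := by rw [mul_assoc, hnorm]
    have hvD : q * d * u t ∈ D := mul_mem (mul_mem hq hd) (hF.mem t)
    obtain ⟨c, hc⟩ := (hF.min t).sandwich' hvD hvD hv hv
    have hc0 : c ≠ 0 := by
      rintro rfl
      exact star_mul_self_ne hdt (by rw [hc, zero_smul])
    have h1 : c • (u t * star (u t) * q') = 0 := by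
      calc c • (u t * star (u t) * q')
          = c • (u t * (star (u t) * u t) * star (u t) * q') := by rw [hnorm]
        _ = u t * (c • (star (u t) * u t)) * star (u t) * q' := by
            simp only [mul_smul_comm, smul_mul_assoc]
        _ = u t * star (q * d * u t) * (q * (d * u t * star (u t)) * q') := by
            rw [← hc]; simp only [mul_assoc]
        _ = 0 := by
            rw [hcon (d * u t * star (u t)) (mul_mem (mul_mem hd (hF.mem t)) (star_mem (hF.mem t))),
              mul_zero]
    exact (smul_eq_zero.1 h1).resolve_left hc0
  have hz0 : z ≠ 0 := by
    intro h
    rw [h, zero_mul] at hzq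
    exact hq0 hzq.symm
  have hzp' := hpm z hzD ⟨hzz, hzs⟩ hzc hzp hz0
  rw [hzp', hpc q' hq', hqp'] at hzq'
  exact hq0' hzq'

theorem two_iso (D : NonUnitalStarSubalgebra ℂ A) [FiniteDimensional ℂ D] {p : A} (hpD : p ∈ D)
    (hpi : p * p = p) (hps : star p = p) (hpc : ∀ a ∈ D, p * a = a * p)
    (hpm : ∀ q ∈ D, (q * q = q ∧ star q = q) → (∀ a ∈ D, q * a = a * q) →
      q * p = q → q ≠ 0 → q = p) {q q' : A} (hq : q ∈ D) (hqs : star q = q) (hq0 : q ≠ 0)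
    (hqi : q * q = q)
    (hqp : q * p = q) (hq' : q' ∈ D) (hq0' : q' ≠ 0) (hqp' : q' * p = q') (hqs' : star q' = q')
    (hqi' : q' * q' = q') :
    ∃ f w w', IsMinProj D f ∧ f * p = f ∧ w ∈ D ∧ w' ∈ D ∧ q * w = w ∧ q' * w' = w' ∧
      star w * w = f ∧ star w' * w' = f := by
  obtain ⟨d, hd, hne⟩ := connect D hpD hpi hps hpc hpm hq hqs hq0 hqp hq' hq0' hqp'
  set y := q * d * q' with hy
  have hyD : y ∈ D := mul_mem (mul_mem hq hd) hq'
  have hyq' : y * q' = y := by rw [hy, mul_assoc, hqi']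
  have hqy : q * y = y := by rw [hy, ← mul_assoc, ← mul_assoc, hqi]
  obtain ⟨f, hf, a, ha, hfa⟩ := exists_minProj D (mul_mem (star_mem hyD) hyD) (by simp)
    (star_mul_self_ne hne)
  have hfq' : f * q' = f := by
    rw [hfa, mul_assoc _ (star y * y) q', mul_assoc (star y) y q', hyq']
  have hq'f : q' * f = f := by
    have := congrArg star hfq'
    rwa [star_mul, hqs', hf.sa] at this
  have hyf : y * f ≠ 0 := by
    intro h
    apply hf.ne
    rw [← hf.idem]
    nth_rewrite 1 [hfa]
    rw [mul_assoc _ (star y * y) f, mul_assoc (star y) y f, h]; simp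
  have hyfD := mul_mem hyD hf.mem
  have hyff : y * f * f = y * f := by rw [mul_assoc, hf.idem]
  obtain ⟨c, hc⟩ := hf.sandwich' hyfD hyfD hyff hyff
  obtain ⟨k, hk, hk2⟩ := exists_normalize hf.idem hf.sa hyf hc
  refine ⟨f, k • (y * f), f, hf, ?_, SMulMemClass.smul_mem _ hyfD, hf.mem, ?_, hq'f, hk2, ?_⟩
  · rw [← hfq', mul_assoc, hqp']
  · rw [mul_smul_comm, ← mul_assoc, hqy]
  · rw [hf.sa, hf.idem]

/-- A reformulation of the Fermion property: sequences of orthogonal isometries. -/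
structure FermData (B : ℕ → NonUnitalStarSubalgebra ℂ A) (P : ℕ → A → Prop) : Prop where
  mono : Monotone B
  fd : ∀ k, FiniteDimensional ℂ (B k)
  dense : Dense (⋃ k, (B k : Set A))
  min : ∀ k e, P k e → IsMinProj (B k) e
  ex : ∃ e, P 0 e
  step : ∀ k e, P k e → ∃ e' w w', P (k + 1) e' ∧ w ∈ B (k + 1) ∧ w' ∈ B (k + 1) ∧
    e * w = w ∧ e * w' = w' ∧ star w * w = e' ∧ star w' * w' = e' ∧ star w * w' = 0

theorem FermData.iter {B : ℕ → NonUnitalStarSubalgebra ℂ A} {P : ℕ → A → Prop}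
    (h : FermData B P) (N : ℕ) : ∀ k e, P k e → ∃ k' > k, ∃ e', P k' e' ∧
      ∃ w : Fin (N + 1) → A, (∀ a, w a ∈ B k') ∧ (∀ a, e * w a = w a) ∧
        ∀ a b, star (w a) * w b = if a = b then e' else 0 := by
  induction N with
  | zero =>
    intro k e hk
    obtain ⟨e', w, w', h1, h2, h3, h4, h5, h6, h7, h8⟩ := h.step k e hk
    refine ⟨k + 1, Nat.lt_succ_self k, e', h1, fun _ => w, fun _ => h2, fun _ => h4, ?_⟩
    intro a b
    rw [h6, if_pos (Fin.ext (by omega))]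
  | succ N ih =>
    intro k e hk
    obtain ⟨e1, w, w', h1, h2, h3, h4, h5, h6, h7, h8⟩ := h.step k e hk
    obtain ⟨k', hk', e', hP, y, hy1, hy2, hy3⟩ := ih (k + 1) e1 h1
    have h8' : star w' * w = 0 := by
      have := congrArg star h8
      simpa using this
    have hB := h.mono hk'.le
    refine ⟨k', by omega, e', hP, Fin.cons (w' * y 0) (fun a => w * y a), ?_, ?_, ?_⟩
    · exact Fin.cases (mul_mem (hB h3) (hy1 0)) fun a => mul_mem (hB h2) (hy1 a)
    · refine Fin.cases ?_ fun a => ?_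
      · simp only [Fin.cons_zero]; rw [← mul_assoc, h5]
      · simp only [Fin.cons_succ]; rw [← mul_assoc, h4]
    · have key : ∀ v v' : A, ∀ a b, star (v * y a) * (v' * y b) = star (y a) * (star v * v') * y b := by
        intro v v' a b
        simp only [star_mul, mul_assoc]
      refine Fin.cases (Fin.cases ?_ fun b => ?_) fun a => Fin.cases ?_ fun b => ?_
      · simp only [Fin.cons_zero]
        rw [key, h7, mul_assoc, hy2, hy3]; simp
      · simp only [Fin.cons_zero, Fin.cons_succ]
        rw [key, h8']; simp [(Fin.succ_ne_zero b).symm]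
      · simp only [Fin.cons_zero, Fin.cons_succ]
        rw [key, h8]; simp
      · simp only [Fin.cons_succ]
        rw [key, h6, mul_assoc, hy2, hy3]; simp

theorem FermData.iter' {B : ℕ → NonUnitalStarSubalgebra ℂ A} {P : ℕ → A → Prop}
    (h : FermData B P) (N : ℕ) (k : ℕ) (e : A) (hk : P k e) : ∃ k' > k, ∃ e', P k' e' ∧
      ∃ w : Fin N → A, (∀ a, w a ∈ B k') ∧ (∀ a, e * w a = w a) ∧
        ∀ a b, star (w a) * w b = if a = b then e' else 0 := by
  obtain ⟨k', hk', e', hP, w, h1, h2, h3⟩ := h.iter N k e hk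
  refine ⟨k', hk', e', hP, fun a => w a.castSucc, fun a => h1 _, fun a => h2 _, fun a b => ?_⟩
  rw [h3]; simp

end basic
end Ferm

namespace Ferm

theorem fermData_of {A : Type*} [NonUnitalCStarAlgebra A] {S : ℕ → NonUnitalStarSubalgebra ℂ A}
    (hS : IsAFPresentation A S) (hF : HasFermionProperty A S) :
    ∃ (B : ℕ → NonUnitalStarSubalgebra ℂ A) (P : ℕ → A → Prop), FermData B P := by
  obtain ⟨hm, hfd, hd⟩ := hS
  obtain ⟨n, p, hn, hp, hpp, hp0, hpc, hpm, hst⟩ := hF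
  refine ⟨fun k => S (n k), fun k e => IsMinProj (S (n k)) e ∧ e * p k = e, ?_, ?_, ?_, ?_, ?_, ?_⟩
  · exact hm.comp hn.monotone
  · exact fun k => hfd _
  · refine hd.mono ?_
    refine Set.iUnion_subset fun k => ?_
    exact Set.subset_iUnion_of_subset k (hm (hn.le_apply (x := k)))
  · exact fun k e h => h.1
  · have := hfd (n 0)
    obtain ⟨f, hf, a, ha, hfa⟩ := exists_minProj (S (n 0)) (hp 0) (hpp 0).2 (hp0 0)
    exact ⟨f, hf, by rw [hfa, mul_assoc, (hpp 0).1]⟩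
  · rintro k e ⟨he, hep⟩
    obtain ⟨hne, q, hq, ⟨hqi, hqs⟩, hq0, hq1, hq2, hq3⟩ :=
      hst k e he.mem ⟨he.idem, he.sa⟩ he.ne hep he.min
    have := hfd (n (k + 1))
    have heD : e ∈ S (n (k + 1)) := hm (hn (Nat.lt_succ_self k)).le he.mem
    have hc := hpc (k + 1) e heD
    set p' := p (k + 1) with hp'
    have hpi : p' * p' = p' := (hpp (k + 1)).1
    have hps : star p' = p' := (hpp (k + 1)).2
    have hpe : p' * e * (p' * e) = p' * e := by
      rw [mul_assoc, ← mul_assoc e, ← hc, mul_assoc p' e e, he.idem, ← mul_assoc, hpi]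
    have hpes : star (p' * e) = p' * e := by rw [star_mul, hps, he.sa, hc]
    have hep2 : e * (p' * e) = p' * e := by rw [hc, ← mul_assoc, he.idem]
    have hpep : p' * e * p' = p' * e := by rw [mul_assoc, ← hc, ← mul_assoc, hpi]
    have hqp : q * p' = q := by
      rw [← hq1, mul_assoc, hpep]
    have heq : e * q = q := by
      conv_lhs => rw [← hq2]
      rw [← mul_assoc, hep2, hq2]
    obtain ⟨f, w, w', h1, h2, h3, h4, h5, h6, h7, h8⟩ :=
      two_iso (S (n (k + 1))) (hp (k + 1)) hpi hps (hpc (k + 1)) (hpm (k + 1)) hq hqs hq0 hqi hqp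
        (q' := p' * e - q) (sub_mem (mul_mem (hp (k + 1)) heD) hq) (sub_ne_zero.2 hq3.symm)
        (by rw [sub_mul, hpep, hqp]) (by rw [star_sub, hpes, hqs])
        (by rw [sub_mul, mul_sub, mul_sub, hpe, hq2, hq1, hqi]; abel)
    refine ⟨f, w, w', ⟨h1, h2⟩, h3, h4, ?_, ?_, h7, h8, ?_⟩
    · rw [← h5, ← mul_assoc, heq]
    · rw [← h6, ← mul_assoc, mul_sub, hep2, heq]
    · rw [← h5, ← h6, star_mul, hqs, mul_assoc, ← mul_assoc q, mul_sub, hq1, hqi]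
      simp

section trans

set_option linter.unusedSectionVars false

variable {X Y : Type*} [NonUnitalCStarAlgebra X] [NonUnitalCStarAlgebra Y]
  {T : Type*} [Fintype T] {κ : Type*}

open scoped Matrix.Norms.L2Operator Classical

/-- Block diagonal matrices. -/
noncomputable def blk (L : T → κ) : NonUnitalStarSubalgebra ℂ (Matrix T T ℂ) where
  carrier := {c | ∀ s t, L s ≠ L t → c s t = 0}
  add_mem' := by
    intro a b ha hb s t h
    simp [ha s t h, hb s t h]
  zero_mem' := by intro s t h; rfl
  mul_mem' := by
    intro a b ha hb s t h
    rw [Matrix.mul_apply]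
    apply Finset.sum_eq_zero
    intro r _
    by_cases hr : L s = L r
    · rw [hb r t (by rwa [← hr]), mul_zero]
    · rw [ha s r hr, zero_mul]
  smul_mem' := by
    intro c a ha s t h
    simp [ha s t h]
  star_mem' := by
    intro a ha s t h
    simp [Matrix.star_apply, ha t s (Ne.symm h)]

theorem mem_blk {L : T → κ} {c : Matrix T T ℂ} : c ∈ blk L ↔ ∀ s t, L s ≠ L t → c s t = 0 :=
  Iff.rfl

/-- the sum `∑ c_st z_s z_t^*`. -/
noncomputable def msum (z : T → Y) : Matrix T T ℂ →ₗ[ℂ] Y where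
  toFun c := ∑ s, ∑ t, c s t • (z s * star (z t))
  map_add' a b := by simp [add_smul, Finset.sum_add_distrib]
  map_smul' k a := by simp [mul_smul, Finset.smul_sum]

theorem msum_apply (z : T → Y) (c : Matrix T T ℂ) :
    msum z c = ∑ s, ∑ t, c s t • (z s * star (z t)) := rfl

theorem msum_star (z : T → Y) (c : Matrix T T ℂ) : msum z (star c) = star (msum z c) := by
  simp only [msum_apply, star_sum, star_smul, star_mul, star_star, Matrix.star_apply]
  rw [Finset.sum_comm]

theorem msum_mul {L : T → κ} {z : T → Y} {g : κ → Y}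
    (h1 : ∀ s t, star (z s) * z t = if s = t then g (L t) else 0)
    (h2 : ∀ t, z t * g (L t) = z t) {c d : Matrix T T ℂ} (hc : c ∈ blk L) :
    msum z (c * d) = msum z c * msum z d := by
  simp only [msum_apply, Matrix.mul_apply, Finset.sum_smul]
  simp only [Finset.sum_mul]
  simp only [Finset.mul_sum]
  have : ∀ s t r p, (c s t • (z s * star (z t))) * (d r p • (z r * star (z p))) =
      if t = r then (c s t * d r p) • (z s * star (z p)) else 0 := by
    intro s t r p
    have e : (z s * star (z t)) * (z r * star (z p)) = z s * (star (z t) * z r) * star (z p) := by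
      simp only [mul_assoc]
    rw [smul_mul_smul_comm, e, h1]
    split_ifs with h
    · subst h
      by_cases hL : L s = L t
      · rw [← hL, h2]
      · rw [hc s t hL]; simp
    · simp
  simp only [this]
  refine Finset.sum_congr rfl fun s _ => ?_
  calc ∑ p, ∑ t, (c s t * d t p) • (z s * star (z p))
      = ∑ t, ∑ p, (c s t * d t p) • (z s * star (z p)) := Finset.sum_comm
    _ = _ := by
      refine Finset.sum_congr rfl fun t _ => ?_
      rw [Finset.sum_comm]
      refine Finset.sum_congr rfl fun p _ => ?_
      simp

theorem msum_norm_le {L : T → κ} {z : T → Y} {g : κ → Y}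
    (h1 : ∀ s t, star (z s) * z t = if s = t then g (L t) else 0)
    (h2 : ∀ t, z t * g (L t) = z t) {c : Matrix T T ℂ} (hc : c ∈ blk L) :
    ‖msum z c‖ ≤ ‖c‖ := by
  have hcl : IsClosed ((blk L : NonUnitalStarSubalgebra ℂ (Matrix T T ℂ)) : Set (Matrix T T ℂ)) :=
    Submodule.closed_of_finiteDimensional (blk L).toSubmodule
  have : IsClosed ((blk L : NonUnitalStarSubalgebra ℂ (Matrix T T ℂ)) : Set (Matrix T T ℂ)) := hcl
  let _ : NonUnitalCStarAlgebra (blk L) := NonUnitalStarSubalgebra.nonUnitalCStarAlgebra _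
  let φ : (blk L) →⋆ₙₐ[ℂ] Y :=
    { toFun := fun c => msum z c.1
      map_smul' := fun k c => by simp
      map_zero' := by simp
      map_add' := fun a b => by simp
      map_mul' := fun a b => msum_mul h1 h2 a.2
      map_star' := fun a => msum_star z a.1 }
  exact NonUnitalStarAlgHom.norm_apply_le φ (⟨c, hc⟩ : blk L)

theorem norm_sum_sq_le {z : T → X} (h1 : ∀ s t, s ≠ t → star (z s) * z t = 0)
    (h2 : ∀ t, ‖star (z t) * z t‖ ≤ 1) (F : Finset T) (β : T → ℂ) :
    ‖∑ t ∈ F, β t • z t‖ ^ 2 ≤ ∑ t ∈ F, ‖β t‖ ^ 2 := by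
  rw [sq, ← CStarRing.norm_star_mul_self]
  have : star (∑ t ∈ F, β t • z t) * ∑ t ∈ F, β t • z t =
      ∑ t ∈ F, (star (β t) * β t) • (star (z t) * z t) := by
    rw [star_sum, Finset.sum_mul]
    refine Finset.sum_congr rfl fun s hs => ?_
    rw [Finset.mul_sum, Finset.sum_eq_single s]
    · rw [star_smul, smul_mul_smul_comm]
    · intro t _ h
      rw [star_smul, smul_mul_smul_comm, h1 s t h.symm, smul_zero]
    · exact fun h => absurd hs h
  rw [this]
  refine (norm_sum_le _ _).trans (Finset.sum_le_sum fun t _ => ?_)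
  rw [norm_smul, norm_mul, norm_star, sq]
  exact mul_le_of_le_one_right (by positivity) (h2 t)

/-- coefficient matrix -/
noncomputable def coefM (L : T → κ) (φ : κ → X →L[ℂ] ℂ) (z : T → X) : X →ₗ[ℂ] Matrix T T ℂ where
  toFun x := Matrix.of fun s t => if L s = L t then φ (L t) (star (z s) * x * z t) else 0
  map_add' a b := by
    ext s t
    simp only [Matrix.of_apply, Matrix.add_apply]
    split_ifs <;> simp [mul_add, add_mul]
  map_smul' k a := by
    ext s t
    simp [mul_smul_comm, smul_mul_assoc]

theorem coefM_apply (L : T → κ) (φ : κ → X →L[ℂ] ℂ) (z : T → X) (x : X) (s t : T) :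
    coefM L φ z x s t = if L s = L t then φ (L t) (star (z s) * x * z t) else 0 := rfl

theorem coefM_mem (L : T → κ) (φ : κ → X →L[ℂ] ℂ) (z : T → X) (x : X) :
    coefM L φ z x ∈ blk L := by
  intro s t h
  rw [coefM_apply, if_neg h]

theorem coefM_bilin {L : T → κ} {φ : κ → X →L[ℂ] ℂ} {z : T → X}
    (h1 : ∀ s t, s ≠ t → star (z s) * z t = 0)
    (h2 : ∀ t, ‖star (z t) * z t‖ ≤ 1) (hφ : ∀ i, ‖φ i‖ ≤ 1) (x : X) (α β : T → ℂ) :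
    ‖∑ s, ∑ t, star (α s) * coefM L φ z x s t * β t‖ ≤
      ‖x‖ * (√(∑ s, ‖α s‖ ^ 2) * √(∑ s, ‖β s‖ ^ 2)) := by
  let I : Finset κ := Finset.univ.image L
  have hI : ∀ t ∈ (Finset.univ : Finset T), L t ∈ I := fun t ht => Finset.mem_image_of_mem L ht
  let v : (T → ℂ) → κ → X := fun α i => ∑ t with L t = i, α t • z t
  have e1 : ∑ s, ∑ t, star (α s) * coefM L φ z x s t * β t =
      ∑ i ∈ I, φ i (star (v α i) * x * v β i) := by
    rw [← Finset.sum_fiberwise_of_maps_to hI]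
    refine Finset.sum_congr rfl fun i _ => ?_
    simp only [v, star_sum, Finset.sum_mul]
    simp only [Finset.mul_sum, map_sum]
    refine Finset.sum_congr rfl fun s hs => ?_
    rw [Finset.sum_filter]
    refine Finset.sum_congr rfl fun t _ => ?_
    have hs' : L s = i := (Finset.mem_filter.1 hs).2
    rw [coefM_apply, hs']
    by_cases h : L t = i
    · rw [if_pos h.symm, if_pos h, h]
      simp only [star_smul, smul_mul_assoc, mul_smul_comm, map_smul, smul_eq_mul]
      ring
    · rw [if_neg (Ne.symm h), if_neg h]; simp
  have e2 : ∀ α : T → ℂ, ∑ i ∈ I, ‖v α i‖ ^ 2 ≤ ∑ t, ‖α t‖ ^ 2 := by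
    intro α
    rw [← Finset.sum_fiberwise_of_maps_to hI (f := fun t => ‖α t‖ ^ 2)]
    exact Finset.sum_le_sum fun i _ => norm_sum_sq_le h1 h2 _ _
  rw [e1]
  calc ‖∑ i ∈ I, φ i (star (v α i) * x * v β i)‖
      ≤ ∑ i ∈ I, ‖φ i (star (v α i) * x * v β i)‖ := norm_sum_le _ _
    _ ≤ ∑ i ∈ I, ‖x‖ * (‖v α i‖ * ‖v β i‖) := by
        refine Finset.sum_le_sum fun i _ => ?_
        calc ‖φ i (star (v α i) * x * v β i)‖ ≤ ‖φ i‖ * ‖star (v α i) * x * v β i‖ :=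
              (φ i).le_opNorm _
          _ ≤ 1 * (‖star (v α i)‖ * ‖x‖ * ‖v β i‖) := by
              refine mul_le_mul (hφ i) ?_ (norm_nonneg _) zero_le_one
              exact (norm_mul_le _ _).trans (by gcongr; exact norm_mul_le _ _)
          _ = _ := by rw [norm_star]; ring
    _ = ‖x‖ * ∑ i ∈ I, (‖v α i‖ * ‖v β i‖) := by rw [Finset.mul_sum]
    _ ≤ _ := by
        gcongr
        refine (Real.sum_mul_le_sqrt_mul_sqrt _ _ _).trans ?_
        gcongr
        · exact e2 α
        · exact e2 β

theorem coefM_norm_le {L : T → κ} {φ : κ → X →L[ℂ] ℂ} {z : T → X}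
    (h1 : ∀ s t, s ≠ t → star (z s) * z t = 0)
    (h2 : ∀ t, ‖star (z t) * z t‖ ≤ 1) (hφ : ∀ i, ‖φ i‖ ≤ 1) (x : X) :
    ‖coefM L φ z x‖ ≤ ‖x‖ := by
  rw [Matrix.cstar_norm_def]
  refine ContinuousLinearMap.opNorm_le_bound _ (norm_nonneg _) fun β => ?_
  set α := Matrix.toEuclideanCLM (n := T) (𝕜 := ℂ) (coefM L φ z x) β with hα
  have hαs : ∀ s, α s = ∑ t, coefM L φ z x s t * β t := by
    intro s
    rw [hα, Matrix.ofLp_toEuclideanCLM]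
    rfl
  have h := coefM_bilin (L := L) h1 h2 hφ x α β
  have e : ∑ s, ∑ t, star (α s) * coefM L φ z x s t * β t = ((‖α‖ ^ 2 : ℝ) : ℂ) := by
    rw [EuclideanSpace.norm_sq_eq]
    push_cast
    refine Finset.sum_congr rfl fun s _ => ?_
    simp only [mul_assoc]
    rw [← Finset.mul_sum, ← hαs]
    exact Complex.conj_mul' _
  rw [e, ← EuclideanSpace.norm_eq, ← EuclideanSpace.norm_eq] at h
  have h' : ‖α‖ ^ 2 ≤ ‖x‖ * (‖α‖ * ‖β‖) := by
    simpa using h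
  by_cases h0 : ‖α‖ = 0
  · rw [h0]; positivity
  · have : 0 < ‖α‖ := lt_of_le_of_ne (norm_nonneg _) (Ne.symm h0)
    nlinarith

/-- the basic transfer maps -/
noncomputable def trans (L : T → κ) (φ : κ → X →L[ℂ] ℂ) (z : T → X) (z' : T → Y) : X →ₗ[ℂ] Y :=
  (msum z').comp (coefM L φ z)

theorem trans_apply (L : T → κ) (φ : κ → X →L[ℂ] ℂ) (z : T → X) (z' : T → Y) (x : X) :
    trans L φ z z' x = ∑ s, ∑ t, coefM L φ z x s t • (z' s * star (z' t)) := rfl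

theorem trans_norm_le {L : T → κ} {φ : κ → X →L[ℂ] ℂ} {z : T → X} {z' : T → Y} {g : κ → Y}
    (h1 : ∀ s t, s ≠ t → star (z s) * z t = 0)
    (h2 : ∀ t, ‖star (z t) * z t‖ ≤ 1) (hφ : ∀ i, ‖φ i‖ ≤ 1)
    (h3 : ∀ s t, star (z' s) * z' t = if s = t then g (L t) else 0)
    (h4 : ∀ t, z' t * g (L t) = z' t) (x : X) : ‖trans L φ z z' x‖ ≤ ‖x‖ :=
  (msum_norm_le h3 h4 (coefM_mem L φ z x)).trans (coefM_norm_le h1 h2 hφ x)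

end trans

section aux

variable {A : Type*} [NonUnitalCStarAlgebra A]

/-- a norming functional -/
noncomputable def nf {X : Type*} [NormedAddCommGroup X] [NormedSpace ℂ X] (x : X) : X →L[ℂ] ℂ :=
  (exists_dual_vector'' ℂ x).choose

theorem nf_norm {X : Type*} [NormedAddCommGroup X] [NormedSpace ℂ X] (x : X) : ‖nf x‖ ≤ 1 :=
  (exists_dual_vector'' ℂ x).choose_spec.1

theorem nf_self {X : Type*} [NormedAddCommGroup X] [NormedSpace ℂ X] (x : X) :
    nf x x = (‖x‖ : ℂ) :=
  (exists_dual_vector'' ℂ x).choose_spec.2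

theorem norm_proj {q : A} (hq : q * q = q) (hs : star q = q) (h0 : q ≠ 0) : ‖q‖ = 1 := by
  have h := CStarRing.norm_star_mul_self (x := q)
  rw [hs, hq] at h
  have : ‖q‖ ≠ 0 := norm_ne_zero_iff.2 h0
  field_simp at h
  exact h.symm

theorem norm_proj_le {q : A} (hq : q * q = q) (hs : star q = q) : ‖q‖ ≤ 1 := by
  by_cases h0 : q = 0
  · simp [h0]
  · exact (norm_proj hq hs h0).le

theorem nf_proj {q : A} (hq : q * q = q) (hs : star q = q) (h0 : q ≠ 0) (c : ℂ) :
    nf q (c • q) = c := by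
  rw [map_smul, nf_self, norm_proj hq hs h0]; simp

/-- compression to the complement of `q`. -/
noncomputable def cmp (q : A) : A →ₗ[ℂ] A where
  toFun y := y - q * y - y * q + q * y * q
  map_add' x y := by noncomm_ring
  map_smul' c x := by
    simp only [mul_smul_comm, smul_mul_assoc, RingHom.id_apply, smul_add, smul_sub]

theorem cmp_apply (q y : A) : cmp q y = y - q * y - y * q + q * y * q := rfl

theorem cmp_norm_le {q : A} (hq : q * q = q) (hs : star q = q) (y : A) : ‖cmp q y‖ ≤ ‖y‖ := by
  let Q : Unitization ℂ A := 1 - (q : Unitization ℂ A)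
  have hqq : (q : Unitization ℂ A) * q = q := by rw [← Unitization.inr_mul, hq]
  have hQ : ‖Q‖ ≤ 1 := by
    apply norm_proj_le
    · simp only [Q, mul_sub, sub_mul, one_mul, mul_one, hqq]; abel
    · simp only [Q, star_sub, star_one, ← Unitization.inr_star, hs]
  have : ((cmp q y : A) : Unitization ℂ A) = Q * y * Q := by
    simp only [Q, cmp_apply, Unitization.inr_add, Unitization.inr_sub, Unitization.inr_mul,
      mul_sub, sub_mul, one_mul, mul_one]
    abel
  rw [← Unitization.norm_inr (𝕜 := ℂ), this]
  calc ‖Q * y * Q‖ ≤ ‖Q‖ * ‖(y : Unitization ℂ A)‖ * ‖Q‖ :=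
        (norm_mul_le _ _).trans (by gcongr; exact norm_mul_le _ _)
    _ ≤ 1 * ‖(y : Unitization ℂ A)‖ * 1 := by gcongr
    _ = ‖y‖ := by rw [Unitization.norm_inr]; ring

theorem mul_cmp {q : A} (hq : q * q = q) (y : A) : q * cmp q y = 0 := by
  simp only [cmp_apply, mul_add, mul_sub, ← mul_assoc, hq]; abel

theorem cmp_mul {q : A} (hq : q * q = q) (y : A) : cmp q y * q = 0 := by
  simp only [cmp_apply, add_mul, sub_mul, mul_assoc, hq]; abel

theorem norm_add_le_of_orth {q a b : A} (hs : star q = q) (h1 : q * a = a)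
    (h2 : a * q = a) (h3 : q * b = 0) (h4 : b * q = 0) {M : ℝ} (ha : ‖a‖ ≤ M) (hb : ‖b‖ ≤ M) :
    ‖a + b‖ ≤ M := by
  have hM : 0 ≤ M := (norm_nonneg _).trans ha
  have e1 : star a * b = 0 := by
    rw [← h1, star_mul, hs, mul_assoc, h3, mul_zero]
  have e2 : star b * a = 0 := by
    have := congrArg star e1
    simpa using this
  have e3 : a * star b = 0 := by
    rw [← h2, mul_assoc]
    have := congrArg star h4
    rw [star_mul, hs, star_zero] at this
    rw [this, mul_zero]
  have e : star (a + b) * (a + b) = star a * a + star b * b := by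
    rw [star_add, add_mul, mul_add, mul_add, e1, e2]; abel
  have e4 : star a * a * (star b * b) = 0 := by
    rw [mul_assoc, ← mul_assoc a, e3]; simp
  have := (IsSelfAdjoint.star_mul_self a).norm_add_eq_max (IsSelfAdjoint.star_mul_self b) e4
  rw [← e, CStarRing.norm_star_mul_self, CStarRing.norm_star_mul_self,
    CStarRing.norm_star_mul_self] at this
  have h5 : ‖a + b‖ * ‖a + b‖ ≤ M * M := by
    rw [this]
    exact max_le (mul_self_le_mul_self (norm_nonneg _) ha) (mul_self_le_mul_self (norm_nonneg _) hb)
  exact abs_le_of_sq_le_sq' (by nlinarith) hM |>.2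

open Filter Topology in
theorem exists_limit {X Y : Type*} [NormedAddCommGroup X] [NormedSpace ℂ X]
    [NormedAddCommGroup Y] [NormedSpace ℂ Y] [CompleteSpace Y] (V : ℕ → Set X) (hV : Monotone V)
    (hd : Dense (⋃ k, V k)) (F : ℕ → X →ₗ[ℂ] Y) (hF : ∀ k x, ‖F k x‖ ≤ ‖x‖)
    (hs : ∀ k, ∀ x ∈ V k, F (k + 1) x = F k x) :
    ∃ f : X →L[ℂ] Y, ∀ k, ∀ x ∈ V k, f x = F k x := by
  have hs' : ∀ k l, k ≤ l → ∀ x ∈ V k, F l x = F k x := by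
    intro k l hkl
    induction l, hkl using Nat.le_induction with
    | base => intros; rfl
    | succ l hkl ih => exact fun x hx => (hs l x (hV hkl hx)).trans (ih x hx)
  have hc : ∀ x, CauchySeq fun k => F k x := by
    intro x
    rw [Metric.cauchySeq_iff']
    intro ε hε
    obtain ⟨y, hy, hxy⟩ := Metric.dense_iff.1 hd x (ε / 3) (by positivity)
    obtain ⟨k, hk⟩ := Set.mem_iUnion.1 hxy
    refine ⟨k, fun n hn => ?_⟩
    have hy' : ‖x - y‖ < ε / 3 := by
      rw [← dist_eq_norm, dist_comm]; exact hy
    have e : F n x - F k x = F n (x - y) - F k (x - y) := by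
      rw [map_sub, map_sub, hs' k n hn y hk]; abel
    rw [dist_eq_norm, e]
    calc ‖F n (x - y) - F k (x - y)‖ ≤ ‖F n (x - y)‖ + ‖F k (x - y)‖ := norm_sub_le _ _
      _ ≤ ‖x - y‖ + ‖x - y‖ := add_le_add (hF _ _) (hF _ _)
      _ < ε := by linarith
  choose f hf using fun x => cauchySeq_tendsto_of_complete (hc x)
  let f' : X →ₗ[ℂ] Y :=
    { toFun := f
      map_add' := fun x y => tendsto_nhds_unique (hf (x + y)) (by
        simpa using (hf x).add (hf y))
      map_smul' := fun c x => tendsto_nhds_unique (hf (c • x)) (by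
        simpa using (hf x).const_smul c) }
  refine ⟨f'.mkContinuous 1 fun x => ?_, fun k x hx => ?_⟩
  · rw [one_mul]
    exact le_of_tendsto (hf x).norm (Eventually.of_forall fun k => hF k x)
  · refine tendsto_nhds_unique (hf x) ?_
    refine tendsto_const_nhds.congr' ?_
    filter_upwards [eventually_ge_atTop k] with l hl
    exact (hs' k l hl x hx).symm

end aux

section state

set_option linter.unusedSectionVars false

open scoped Classical

universe uG uA

/-- A stage of the construction. -/
structure Pre (G : Type uG) (A : Type uA) where
  m : ℕ
  T : Type
  ft : Fintype T
  u : T → G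
  b : T → G
  e : A
  v : T → A

attribute [instance] Pre.ft

variable {G : Type uG} {A : Type uA} [CStarAlgebra G] [NonUnitalCStarAlgebra A]

structure Pre.Good (σ : Pre G A) (D : NonUnitalStarSubalgebra ℂ G)
    (B : ℕ → NonUnitalStarSubalgebra ℂ A) (P : ℕ → A → Prop) : Prop where
  umem : ∀ t, σ.u t ∈ D
  uu : ∀ s t, star (σ.u s) * σ.u t = if s = t then σ.b t else 0
  bmin : ∀ t, IsMinProj D (σ.b t)
  bb : ∀ s t, σ.b s ≠ σ.b t → ∀ a ∈ D, star (σ.u s) * a * σ.u t = 0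
  usum : ∑ t, σ.u t * star (σ.u t) = 1
  hP : P σ.m σ.e
  emin : IsMinProj (B σ.m) σ.e
  vmem : ∀ t, σ.v t ∈ B σ.m
  vv : ∀ s t, star (σ.v s) * σ.v t = if s = t then σ.e else 0

namespace Pre

/-- coefficients in `G` -/
noncomputable def cu (σ : Pre G A) : G →ₗ[ℂ] Matrix σ.T σ.T ℂ := coefM σ.b nf σ.u
/-- coefficients in `A` -/
noncomputable def cv (σ : Pre G A) : A →ₗ[ℂ] Matrix σ.T σ.T ℂ := coefM σ.b (fun _ => nf σ.e) σ.v
noncomputable def Th (σ : Pre G A) : G →ₗ[ℂ] A := trans σ.b nf σ.u σ.v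
noncomputable def R (σ : Pre G A) : A →ₗ[ℂ] G := trans σ.b (fun _ => nf σ.e) σ.v σ.u
noncomputable def q (σ : Pre G A) : A := ∑ t, σ.v t * star (σ.v t)

theorem Th_eq (σ : Pre G A) (x : G) : σ.Th x = msum σ.v (σ.cu x) := rfl
theorem R_eq (σ : Pre G A) (x : A) : σ.R x = msum σ.u (σ.cv x) := rfl

theorem q_eq (σ : Pre G A) : σ.q = msum σ.v 1 := by
  simp [msum_apply, Pre.q, Matrix.one_apply]

theorem one_mem (σ : Pre G A) : (1 : Matrix σ.T σ.T ℂ) ∈ blk σ.b := by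
  intro s t h
  rw [Matrix.one_apply_ne]
  rintro rfl
  exact h rfl

theorem cu_mem (σ : Pre G A) (x : G) : σ.cu x ∈ blk σ.b := coefM_mem _ _ _ _

theorem cv_mem (σ : Pre G A) (x : A) : σ.cv x ∈ blk σ.b := coefM_mem _ _ _ _

namespace Good

variable {σ : Pre G A} {D : NonUnitalStarSubalgebra ℂ G} {B : ℕ → NonUnitalStarSubalgebra ℂ A}
  {P : ℕ → A → Prop}

theorem ub (h : σ.Good D B P) (t : σ.T) : σ.u t * σ.b t = σ.u t :=
  mul_proj_of_star_mul_self (h.bmin t).idem (h.bmin t).sa (by rw [h.uu, if_pos rfl])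

theorem ve (h : σ.Good D B P) (t : σ.T) : σ.v t * σ.e = σ.v t :=
  mul_proj_of_star_mul_self h.emin.idem h.emin.sa (by rw [h.vv, if_pos rfl])

theorem ev (h : σ.Good D B P) (t : σ.T) : σ.e * star (σ.v t) = star (σ.v t) := by
  have := congrArg star (h.ve t)
  rwa [star_mul, h.emin.sa] at this

theorem bu (h : σ.Good D B P) (t : σ.T) : σ.b t * star (σ.u t) = star (σ.u t) := by
  have := congrArg star (h.ub t)
  rwa [star_mul, (h.bmin t).sa] at this

theorem cu_spec (h : σ.Good D B P) {a : G} (ha : a ∈ D) (s t : σ.T) :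
    star (σ.u s) * a * σ.u t = σ.cu a s t • σ.b t := by
  rw [cu, coefM_apply]
  split_ifs with hb
  · have hs : σ.u s * σ.b t = σ.u s := by rw [← hb, h.ub]
    obtain ⟨c, hc⟩ := (h.bmin t).sandwich (h.umem s) (h.umem t) ha hs (h.ub t)
    rw [hc, nf_proj (h.bmin t).idem (h.bmin t).sa (h.bmin t).ne]
  · rw [h.bb s t hb a ha, zero_smul]

theorem msum_cu (h : σ.Good D B P) {a : G} (ha : a ∈ D) : msum σ.u (σ.cu a) = a := by
  have e : a = (∑ t, σ.u t * star (σ.u t)) * a * (∑ t, σ.u t * star (σ.u t)) := by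
    rw [h.usum, one_mul, mul_one]
  conv_rhs => rw [e]
  simp only [Finset.sum_mul]
  simp only [Finset.mul_sum]
  rw [msum_apply]
  refine Finset.sum_congr rfl fun s _ => Finset.sum_congr rfl fun t _ => ?_
  calc σ.cu a s t • (σ.u s * star (σ.u t))
      = σ.u s * (σ.cu a s t • σ.b t) * star (σ.u t) := by
        rw [mul_smul_comm, smul_mul_assoc, mul_assoc, h.bu]
    _ = _ := by rw [← h.cu_spec ha]; simp only [mul_assoc]

theorem sandwich_msum (h : σ.Good D B P) (c : Matrix σ.T σ.T ℂ) (s t : σ.T) :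
    star (σ.v s) * msum σ.v c * σ.v t = c s t • σ.e := by
  rw [msum_apply, Finset.mul_sum, Finset.sum_mul, Finset.sum_eq_single s]
  · rw [Finset.mul_sum, Finset.sum_mul, Finset.sum_eq_single t]
    · rw [mul_smul_comm, smul_mul_assoc, ← mul_assoc, mul_assoc, h.vv, h.vv, if_pos rfl, if_pos rfl,
        h.emin.idem]
    · intro r _ hr
      rw [mul_smul_comm, smul_mul_assoc, ← mul_assoc, mul_assoc, h.vv r t, if_neg hr, mul_zero,
        smul_zero]
    · simp
  · intro r _ hr
    rw [Finset.mul_sum, Finset.sum_mul]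
    refine Finset.sum_eq_zero fun p _ => ?_
    rw [mul_smul_comm, smul_mul_assoc, ← mul_assoc, h.vv s r, if_neg hr.symm]
    simp
  · simp

theorem cv_msum (h : σ.Good D B P) {c : Matrix σ.T σ.T ℂ} (hc : c ∈ blk σ.b) : σ.cv (msum σ.v c) = c := by
  ext s t
  rw [cv, coefM_apply, h.sandwich_msum, nf_proj h.emin.idem h.emin.sa h.emin.ne]
  split_ifs with hb
  · rfl
  · exact (hc s t hb).symm

theorem R_Th (h : σ.Good D B P) {a : G} (ha : a ∈ D) : σ.R (σ.Th a) = a := by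
  rw [R_eq, Th_eq, h.cv_msum (σ.cu_mem a), h.msum_cu ha]

theorem Th_norm (h : σ.Good D B P) (x : G) : ‖σ.Th x‖ ≤ ‖x‖ := by
  refine trans_norm_le (L := σ.b) (φ := nf) (z := σ.u) (z' := σ.v) (g := fun _ => σ.e)
    ?_ ?_ ?_ h.vv h.ve x
  · intro s t hst
    rw [h.uu, if_neg hst]
  · intro t
    rw [h.uu, if_pos rfl]
    exact norm_proj_le (h.bmin t).idem (h.bmin t).sa
  · exact fun i => nf_norm i

theorem R_norm (h : σ.Good D B P) (x : A) : ‖σ.R x‖ ≤ ‖x‖ := by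
  refine trans_norm_le (L := σ.b) (φ := fun _ => nf σ.e) (z := σ.v) (z' := σ.u) (g := fun b => b)
    ?_ ?_ ?_ h.uu h.ub x
  · intro s t hst
    rw [h.vv, if_neg hst]
  · intro t
    rw [h.vv, if_pos rfl]
    exact norm_proj_le h.emin.idem h.emin.sa
  · exact fun i => nf_norm _

theorem q_msum (h : σ.Good D B P) (c : Matrix σ.T σ.T ℂ) : σ.q * msum σ.v c = msum σ.v c := by
  rw [q_eq, ← msum_mul (L := σ.b) (g := fun _ => σ.e) h.vv h.ve σ.one_mem, one_mul]

theorem msum_q (h : σ.Good D B P) {c : Matrix σ.T σ.T ℂ} (hc : c ∈ blk σ.b) : msum σ.v c * σ.q = msum σ.v c := by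
  rw [q_eq, ← msum_mul (L := σ.b) (g := fun _ => σ.e) h.vv h.ve hc, mul_one]

theorem q_idem (h : σ.Good D B P) : σ.q * σ.q = σ.q := by
  nth_rewrite 2 [q_eq]
  rw [h.q_msum, q_eq]

theorem _root_.Ferm.Pre.q_sa (σ : Pre G A) : star σ.q = σ.q := by
  simp [Pre.q]

theorem q_v (h : σ.Good D B P) (t : σ.T) : σ.q * σ.v t = σ.v t := by
  rw [Pre.q, Finset.sum_mul, Finset.sum_eq_single t]
  · rw [mul_assoc, h.vv, if_pos rfl, h.ve]
  · intro s _ hs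
    rw [mul_assoc, h.vv, if_neg hs, mul_zero]
  · simp

theorem R_congr (h : σ.Good D B P) {x y : A} (hxy : σ.q * x = y) : σ.R x = σ.R y := by
  rw [R_eq, R_eq]
  congr 1
  ext s t
  rw [cv, coefM_apply, coefM_apply, ← hxy]
  congr 2
  have : star (σ.v s) * σ.q = star (σ.v s) := by
    have := congrArg star (h.q_v s)
    rwa [star_mul, q_sa] at this
  rw [← mul_assoc, this]

theorem msum_mem (h : σ.Good D B P) (c : Matrix σ.T σ.T ℂ) : msum σ.v c ∈ B σ.m := by
  rw [msum_apply]
  exact sum_mem fun s _ => sum_mem fun t _ =>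
    SMulMemClass.smul_mem _ (mul_mem (h.vmem s) (star_mem (h.vmem t)))

theorem q_mem (h : σ.Good D B P) : σ.q ∈ B σ.m := by
  rw [q_eq]
  exact h.msum_mem _

end Good
end Pre
end state

section step

set_option linter.unusedSectionVars false

open scoped Classical

universe uG uA

section ref

variable {T T' : Type} [Fintype T] [Fintype T'] {n : ℕ} {κ : Type*}

/-- The second index type is identified with pairs `(t, α)` with `b t = i α`. -/
structure Cov (b : T → κ) (i : Fin n → κ) (p : T' → T) (r : T' → Fin n) : Prop where
  lab : ∀ x, b (p x) = i (r x)
  inj : ∀ x x', p x = p x' → r x = r x' → x = x'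
  surj : ∀ t α, b t = i α → ∃ x, p x = t ∧ r x = α

variable {b : T → κ} {i : Fin n → κ} {p : T' → T} {r : T' → Fin n}

theorem Cov.sum (h : Cov b i p r) {M : Type*} [AddCommMonoid M] (F : T → Fin n → M) :
    ∑ x, F (p x) (r x) = ∑ t, ∑ α, if b t = i α then F t α else 0 := by
  rw [← Fintype.sum_prod_type' (f := fun t α => if b t = i α then F t α else 0),
    ← Finset.sum_filter]
  refine Finset.sum_nbij (fun x => (p x, r x)) ?_ ?_ ?_ ?_
  · intro x _
    simpa using h.lab x
  · intro x _ x' _ hx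
    exact h.inj x x' (congrArg Prod.fst hx) (congrArg Prod.snd hx)
  · rintro ⟨t, α⟩ hx
    obtain ⟨x, rfl, rfl⟩ := h.surj t α (by simpa using hx)
    exact ⟨x, by simp, rfl⟩
  · intro x _; rfl

variable (p r) in
/-- refinement of a matrix -/
noncomputable def ref (c : Matrix T T ℂ) : Matrix T' T' ℂ :=
  Matrix.of fun x y => if r x = r y then c (p x) (p y) else 0

theorem ref_apply (c : Matrix T T ℂ) (x y : T') :
    ref p r c x y = if r x = r y then c (p x) (p y) else 0 := rfl

theorem Cov.ref_one (h : Cov b i p r) : ref p r (1 : Matrix T T ℂ) = 1 := by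
  ext x y
  rw [ref_apply, Matrix.one_apply, Matrix.one_apply]
  by_cases hxy : x = y
  · simp [hxy]
  · rw [if_neg hxy]
    split_ifs with h1 h2
    · exact absurd (h.inj _ _ h2 h1) hxy
    · rfl
    · rfl

theorem ref_star (c : Matrix T T ℂ) : ref p r (star c) = star (ref p r c) := by
  ext x y
  rw [ref_apply, Matrix.star_apply, Matrix.star_apply, ref_apply]
  by_cases h : r x = r y
  · rw [if_pos h, if_pos h.symm]
  · rw [if_neg h, if_neg (Ne.symm h), star_zero]

theorem Cov.msum_ref (h : Cov b i p r) {Y : Type*} [NonUnitalCStarAlgebra Y] {z : T → Y}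
    {y : Fin n → Y} {z' : T' → Y} (hz : ∀ x, z' x = z (p x) * y (r x))
    {c : Matrix T T ℂ} (hc : c ∈ blk b) :
    msum z' (ref p r c) =
      ∑ s, ∑ t, c s t • (z s * (∑ α with i α = b t, y α * star (y α)) * star (z t)) := by
  rw [msum_apply]
  simp only [ref_apply, hz]
  have e1 : ∀ x : T',
      ∑ x' : T', (if r x = r x' then c (p x) (p x') else 0) •
        (z (p x) * y (r x) * star (z (p x') * y (r x'))) =
      ∑ t, if b t = i (r x) then
        c (p x) t • (z (p x) * (y (r x) * star (y (r x))) * star (z t)) else 0 := by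
    intro x
    rw [h.sum (fun t β => (if r x = β then c (p x) t else 0) •
        (z (p x) * y (r x) * star (z t * y β)))]
    refine Finset.sum_congr rfl fun t _ => ?_
    rw [Finset.sum_eq_single (r x)]
    · simp only [if_true, star_mul, mul_assoc]
    · intro β _ hβ
      rw [if_neg (Ne.symm hβ), zero_smul, ite_self]
    · simp
  rw [Finset.sum_congr rfl fun x _ => e1 x]
  rw [h.sum (fun s α => ∑ t, if b t = i α then
        c s t • (z s * (y α * star (y α)) * star (z t)) else 0)]
  refine Finset.sum_congr rfl fun s _ => ?_
  have e2 : ∀ α, (if b s = i α then ∑ t, (if b t = i α then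
        c s t • (z s * (y α * star (y α)) * star (z t)) else 0) else 0) =
      ∑ t, if i α = b t then c s t • (z s * (y α * star (y α)) * star (z t)) else 0 := by
    intro α
    split_ifs with h
    · refine Finset.sum_congr rfl fun t _ => ?_
      simp only [eq_comm]
    · refine (Finset.sum_eq_zero fun t _ => ?_).symm
      split_ifs with h'
      · rw [hc s t (by rw [← h']; exact h), zero_smul]
      · rfl
  rw [Finset.sum_congr rfl fun α _ => e2 α, Finset.sum_comm]
  refine Finset.sum_congr rfl fun t _ => ?_
  rw [← Finset.sum_filter, ← Finset.smul_sum, Finset.mul_sum, Finset.sum_mul]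

end ref

variable {G : Type uG} {A : Type uA} [CStarAlgebra G] [NonUnitalCStarAlgebra A]

/-- the refined stage -/
noncomputable def Pre.nxt (σ : Pre G A) {n : ℕ} (y : Fin n → G) (i : Fin n → G) (m' : ℕ) (e' : A)
    (w : Fin n → A) : Pre G A where
  m := m'
  T := {x : σ.T × Fin n // σ.b x.1 = i x.2}
  ft := inferInstance
  u x := σ.u x.1.1 * y x.1.2
  b x := star (y x.1.2) * y x.1.2
  e := e'
  v x := σ.v x.1.1 * w x.1.2

theorem Pre.Good.step {σ : Pre G A} {D D' : NonUnitalStarSubalgebra ℂ G}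
    {B : ℕ → NonUnitalStarSubalgebra ℂ A} {P : ℕ → A → Prop} (h : σ.Good D B P)
    (hF : FermData B P) (hD : D ≤ D') [FiniteDimensional ℂ D'] :
    ∃ σ' : Pre G A, σ'.Good D' B P ∧ σ.m < σ'.m ∧ (∀ x ∈ B σ.m, σ'.R x = σ.R x) ∧
      (∀ a ∈ D, σ.Th a * σ'.q = σ'.Th a ∧ σ'.q * σ.Th a = σ'.Th a) ∧
      σ.q * σ'.q = σ'.q ∧ σ'.q * σ.q = σ'.q := by
  obtain ⟨n, y, j, hy, hysum⟩ := exists_frame D' (fun k : Set.range σ.b => k.1)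
    (by rintro ⟨_, t, rfl⟩; exact hD (h.bmin t).mem)
    (by rintro ⟨_, t, rfl⟩; exact (h.bmin t).idem)
    (by rintro ⟨_, t, rfl⟩; exact (h.bmin t).sa)
    (by
      rintro ⟨_, s, rfl⟩ ⟨_, t, rfl⟩ hne
      have hne' : σ.b s ≠ σ.b t := fun h0 => hne (Subtype.ext h0)
      have := h.bb s t hne' (σ.u s * star (σ.u t)) (mul_mem (h.umem s) (star_mem (h.umem t)))
      rw [← mul_assoc, mul_assoc, h.uu, h.uu, if_pos rfl, if_pos rfl] at this
      exact this)
  obtain ⟨m', hm', e', hP', w, hw, hew, hww⟩ := hF.iter' n σ.m σ.e h.hP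
  let i : Fin n → G := fun α => (j α).1
  have hiy : ∀ α, i α * y α = y α := hy.sub
  have hisum : ∀ t, ∑ α with i α = σ.b t, y α * star (y α) = σ.b t := by
    intro t
    refine Eq.trans ?_ (hysum ⟨σ.b t, t, rfl⟩)
    refine Finset.sum_congr (Finset.filter_congr fun α _ => ?_) fun _ _ => rfl
    simp only [i, Subtype.ext_iff]
  have e'min := hF.min _ _ hP'
  have hye : ∀ α, y α * (star (y α) * y α) = y α := fun α =>
      mul_proj_of_star_mul_self (hy.min α).idem (hy.min α).sa rfl
  obtain ⟨σ', p, r, hcov, hu', hb', hv', rfl, rfl⟩ : ∃ (σ' : Pre G A) (p : σ'.T → σ.T)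
      (r : σ'.T → Fin n), Cov σ.b i p r ∧ (∀ x, σ'.u x = σ.u (p x) * y (r x)) ∧
      (∀ x, σ'.b x = star (y (r x)) * y (r x)) ∧ (∀ x, σ'.v x = σ.v (p x) * w (r x)) ∧
      σ'.m = m' ∧ σ'.e = e' :=
    ⟨σ.nxt y i m' e' w, fun x => x.1.1, fun x => x.1.2,
      ⟨fun x => x.2, fun x x' h1 h2 => Subtype.ext (Prod.ext h1 h2),
        fun t α h1 => ⟨⟨(t, α), h1⟩, rfl, rfl⟩⟩, fun _ => rfl, fun _ => rfl, fun _ => rfl, rfl, rfl⟩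
  have hus : ∀ c ∈ blk σ.b, msum σ'.u (ref p r c) = msum σ.u c := by
    intro c hc
    refine (hcov.msum_ref hu' hc).trans ?_
    rw [msum_apply]
    refine Finset.sum_congr rfl fun s _ => Finset.sum_congr rfl fun t _ => ?_
    rw [hisum, mul_assoc, h.bu]
  have good : σ'.Good D' B P :=
    { umem := fun x => by rw [hu']; exact mul_mem (hD (h.umem _)) (hy.mem _)
      uu := by
        intro x x'
        have e1 : star (σ'.u x) * σ'.u x' =
          star (y (r x)) * (star (σ.u (p x)) * σ.u (p x')) * y (r x') := by
          simp only [hu', hv', star_mul, mul_assoc]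
        rw [e1, h.uu]
        by_cases hx : x = x'
        · subst hx
          rw [if_pos rfl, if_pos rfl, mul_assoc, hcov.lab x, hiy, hb']
        · rw [if_neg hx]
          by_cases hs : (p x) = (p x')
          · have hα : (r x) ≠ (r x') := fun h2 => hx (hcov.inj _ _ hs h2)
            rw [if_pos hs, mul_assoc, hcov.lab x', hiy, hy.orth _ _ hα]
          · rw [if_neg hs]; simp
      bmin := fun x => by rw [hb']; exact hy.min _
      bb := by
        intro x x' hne a ha
        have e1 : star (σ'.u x) * a * σ'.u x' =
          star (y (r x)) * (star (σ.u (p x)) * a * σ.u (p x')) * y (r x') := by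
          simp only [hu', hv', star_mul, mul_assoc]
        rw [e1]
        exact (hy.dich (r x) (r x')).resolve_left (by rwa [hb', hb'] at hne) _
          (mul_mem (mul_mem (star_mem (hD (h.umem _))) ha) (hD (h.umem _)))
      usum := by
        have e1 : ∑ x, σ'.u x * star (σ'.u x) = msum σ'.u (ref p r 1) := by
          rw [hcov.ref_one, msum_apply]
          simp [Matrix.one_apply]
        rw [e1, hus 1 σ.one_mem, msum_apply, ← h.usum]
        simp [Matrix.one_apply]
      hP := hP'
      emin := e'min
      vmem := fun x => by rw [hv']; exact mul_mem (hF.mono hm'.le (h.vmem _)) (hw _)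
      vv := by
        intro x x'
        have e1 : star (σ'.v x) * σ'.v x' =
          star (w (r x)) * (star (σ.v (p x)) * σ.v (p x')) * w (r x') := by
          simp only [hu', hv', star_mul, mul_assoc]
        rw [e1, h.vv]
        by_cases hx : x = x'
        · subst hx
          rw [if_pos rfl, if_pos rfl, mul_assoc, hew, hww, if_pos rfl]
        · rw [if_neg hx]
          by_cases hs : (p x) = (p x')
          · have hα : (r x) ≠ (r x') := fun h2 => hx (hcov.inj _ _ hs h2)
            rw [if_pos hs, mul_assoc, hew, hww, if_neg hα]
          · rw [if_neg hs]; simp }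
  have hcu : ∀ a ∈ D, σ'.cu a = ref p r (σ.cu a) := by
    intro a ha
    ext x x'
    have h1 := good.cu_spec (hD ha) x x'
    have e1 : star (σ'.u x) * a * σ'.u x' =
      star (y (r x)) * (star (σ.u (p x)) * a * σ.u (p x')) * y (r x') := by
      simp only [hu', hv', star_mul, mul_assoc]
    rw [e1, h.cu_spec ha, mul_smul_comm, smul_mul_assoc, mul_assoc, hcov.lab x', hiy] at h1
    have e2 : star (y (r x)) * y (r x') = if (r x) = (r x') then σ'.b x' else 0 := by
      split_ifs with hα
      · rw [hα, hb']
      · exact hy.orth _ _ hα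
    have e3 : ref p r (σ.cu a) x x' • σ'.b x' = σ'.cu a x x' • σ'.b x' := by
      rw [← h1, e2, ref_apply]
      split_ifs <;> simp
    exact (smul_left_injective ℂ (good.bmin x').ne e3).symm
  have hcv : ∀ x ∈ B σ.m, σ'.cv x = ref p r (σ.cv x) := by
    intro a ha
    ext x x'
    obtain ⟨c, hc⟩ := h.emin.sandwich (h.vmem (p x)) (h.vmem (p x')) ha (h.ve _) (h.ve _)
    have e1 : star (σ'.v x) * a * σ'.v x' =
      star (w (r x)) * (star (σ.v (p x)) * a * σ.v (p x')) * w (r x') := by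
      simp only [hu', hv', star_mul, mul_assoc]
    rw [ref_apply, Pre.cv, Pre.cv, coefM_apply, coefM_apply, e1, hc,
      nf_proj h.emin.idem h.emin.sa h.emin.ne, mul_smul_comm, smul_mul_assoc, mul_assoc, hew, hww]
    by_cases hα : (r x) = (r x')
    · have hb : σ'.b x = σ'.b x' := by
        rw [hb', hb', hα]
      have hbb : σ.b (p x) = σ.b (p x') := by rw [hcov.lab x, hcov.lab x', hα]
      rw [if_pos hb, if_pos hbb, if_pos hα, if_pos hα]
      exact nf_proj e'min.idem e'min.sa e'min.ne c
    · rw [if_neg hα, if_neg hα]; simp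
  have hq' : σ'.q = ∑ t, σ.v t * (∑ α with i α = σ.b t, w α * star (w α)) * star (σ.v t) := by
    rw [Pre.q_eq, ← hcov.ref_one]
    refine (hcov.msum_ref hv' σ.one_mem).trans ?_
    simp [Matrix.one_apply]
  have hvq : ∀ c ∈ blk σ.b, msum σ.v c * σ'.q = msum σ'.v (ref p r c) := by
    intro c hc
    refine Eq.trans ?_ (hcov.msum_ref hv' hc).symm
    rw [hq', msum_apply, Finset.sum_mul]
    refine Finset.sum_congr rfl fun s _ => ?_
    rw [Finset.sum_mul]
    refine Finset.sum_congr rfl fun t _ => ?_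
    rw [Finset.mul_sum, Finset.sum_eq_single t]
    · have hek : σ.e * (∑ α with i α = σ.b t, w α * star (w α)) =
          ∑ α with i α = σ.b t, w α * star (w α) := by
        rw [Finset.mul_sum]
        exact Finset.sum_congr rfl fun α _ => by rw [← mul_assoc, hew]
      rw [smul_mul_assoc]
      congr 1
      rw [mul_assoc (σ.v t), mul_assoc, ← mul_assoc (star (σ.v t)), h.vv, if_pos rfl, ← mul_assoc σ.e,
        hek, mul_assoc]
    · intro r _ hr
      rw [smul_mul_assoc, mul_assoc (σ.v r), mul_assoc, ← mul_assoc (star (σ.v t)), h.vv,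
        if_neg hr.symm]
      simp
    · simp
  have hqv : ∀ c ∈ blk σ.b, σ'.q * msum σ.v c = msum σ'.v (ref p r c) := by
    intro c hc
    have := congrArg star (hvq (star c) (star_mem hc))
    rwa [star_mul, Pre.q_sa, ← msum_star, ← msum_star, star_star, ← ref_star, star_star] at this
  refine ⟨σ', good, hm', ?_, ?_, ?_, ?_⟩
  · intro x hx
    rw [Pre.R_eq, Pre.R_eq, hcv x hx]
    exact hus _ (σ.cv_mem x)
  · intro a ha
    rw [Pre.Th_eq, Pre.Th_eq, hcu a ha]
    exact ⟨hvq _ (σ.cu_mem a), hqv _ (σ.cu_mem a)⟩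
  · rw [Pre.q_eq σ, hvq 1 σ.one_mem, hcov.ref_one]
    exact (Pre.q_eq σ').symm
  · rw [Pre.q_eq σ, hqv 1 σ.one_mem, hcov.ref_one]
    exact (Pre.q_eq σ').symm

end step

section limit

set_option linter.unusedSectionVars false

open scoped Classical

universe uG uA

variable {G : Type uG} {A : Type uA} [CStarAlgebra G] [NonUnitalCStarAlgebra A]

/-- A stage together with the approximate embedding. -/
structure St (D : NonUnitalStarSubalgebra ℂ G)
    (B : ℕ → NonUnitalStarSubalgebra ℂ A) (P : ℕ → A → Prop) where
  σ : Pre G A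
  J : G →ₗ[ℂ] A
  good : σ.Good D B P
  norm : ∀ x, ‖J x‖ ≤ ‖x‖
  mem : ∀ x, J x ∈ B σ.m
  left : ∀ x, σ.q * J x = σ.Th x
  right : ∀ x, J x * σ.q = σ.Th x

variable {D D' : NonUnitalStarSubalgebra ℂ G}
  {B : ℕ → NonUnitalStarSubalgebra ℂ A} {P : ℕ → A → Prop}

theorem St.step (S : St D B P) (hF : FermData B P) (hD : D ≤ D') [FiniteDimensional ℂ D'] :
    ∃ S' : St D' B P, S.σ.m < S'.σ.m ∧ (∀ x ∈ B S.σ.m, S'.σ.R x = S.σ.R x) ∧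
      ∀ a ∈ D, S'.J a = S.J a := by
  obtain ⟨τ, hg, hm, hR, hT, hq1, hq2⟩ := S.good.step hF hD
  have hq : τ.q * τ.q = τ.q := hg.q_idem
  have hs : star τ.q = τ.q := τ.q_sa
  have hl : ∀ x, τ.q * τ.Th x = τ.Th x := fun x => by rw [Pre.Th_eq, hg.q_msum]
  have hr : ∀ x, τ.Th x * τ.q = τ.Th x := fun x => by rw [Pre.Th_eq, hg.msum_q (τ.cu_mem x)]
  refine ⟨⟨τ, τ.Th + (cmp τ.q).comp S.J, hg, ?_, ?_, ?_, ?_⟩, hm, hR, ?_⟩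
  · intro x
    exact norm_add_le_of_orth hs (hl x) (hr x) (mul_cmp hq _) (cmp_mul hq _) (hg.Th_norm x)
      ((cmp_norm_le hq hs _).trans (S.norm x))
  · intro x
    have hJ : S.J x ∈ B τ.m := hF.mono hm.le (S.mem x)
    have hqm := hg.q_mem
    refine add_mem ?_ ?_
    · rw [Pre.Th_eq]; exact hg.msum_mem _
    · rw [LinearMap.comp_apply, cmp_apply]
      exact add_mem (sub_mem (sub_mem hJ (mul_mem hqm hJ)) (mul_mem hJ hqm))
        (mul_mem (mul_mem hqm hJ) hqm)
  · intro x
    rw [LinearMap.add_apply, LinearMap.comp_apply, mul_add, mul_cmp hq, add_zero, hl]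
  · intro x
    rw [LinearMap.add_apply, LinearMap.comp_apply, add_mul, cmp_mul hq, add_zero, hr]
  · intro a ha
    have h1 : τ.q * S.J a = τ.Th a := by
      rw [← (hT a ha).2, ← S.left, ← mul_assoc, hq2]
    have h2 : S.J a * τ.q = τ.Th a := by
      rw [← (hT a ha).1, ← S.right, mul_assoc, hq1]
    change τ.Th a + cmp τ.q (S.J a) = S.J a
    rw [cmp_apply, h1, h2, hr]
    abel

theorem exists_base (hF : FermData B P) [Nontrivial G] (h1 : (1 : G) ∈ D)
    (hD : ∀ a ∈ D, ∃ c : ℂ, a = c • 1) : Nonempty (St D B P) := by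
  obtain ⟨e, he⟩ := hF.ex
  have hm := hF.min 0 e he
  let σ : Pre G A := ⟨0, Unit, inferInstance, fun _ => 1, fun _ => 1, e, fun _ => e⟩
  have hg : σ.Good D B P := by
    refine ⟨fun _ => h1, fun s t => ?_, fun t => ?_, fun s t h => (h rfl).elim, ?_, he, hm,
      fun _ => hm.mem, fun s t => ?_⟩
    · simp [σ]
    · refine ⟨h1, ?_, ?_, ?_, ?_⟩
      · simp [σ]
      · simp [σ]
      · simp [σ]
      · intro a ha
        obtain ⟨c, rfl⟩ := hD a ha
        exact ⟨c, by simp [σ]⟩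
    · simp [σ]
    · simp [σ, hm.sa, hm.idem]
  refine ⟨⟨σ, σ.Th, hg, hg.Th_norm, ?_, ?_, ?_⟩⟩
  · intro x
    rw [Pre.Th_eq]; exact hg.msum_mem _
  · intro x
    rw [Pre.Th_eq, hg.q_msum]
  · intro x
    rw [Pre.Th_eq, hg.msum_q (σ.cu_mem x)]

theorem exists_retract {H : ℕ → NonUnitalStarSubalgebra ℂ G} (hF : FermData B P) [Nontrivial G]
    (hmono : Monotone H) (hfd : ∀ k, FiniteDimensional ℂ (H k))
    (hdense : Dense (⋃ k, (H k : Set G))) (h1 : (1 : G) ∈ H 0)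
    (h0 : ∀ a ∈ H 0, ∃ c : ℂ, a = c • 1) :
    ∃ (r : A →L[ℂ] G) (j : G →L[ℂ] A), ∀ x, r (j x) = x := by
  obtain ⟨S0⟩ := exists_base hF h1 h0
  have hstep : ∀ k (S : St (H k) B P), ∃ S' : St (H (k+1)) B P, S.σ.m < S'.σ.m ∧
      (∀ x ∈ B S.σ.m, S'.σ.R x = S.σ.R x) ∧ ∀ a ∈ H k, S'.J a = S.J a :=
    fun k S => by
      haveI := hfd (k+1)
      exact S.step hF (hmono (Nat.le_succ k))
  choose nx hn1 hn2 hn3 using hstep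
  let S : ∀ k, St (H k) B P := fun k => Nat.rec S0 nx k
  have hm : StrictMono fun k => (S k).σ.m := strictMono_nat_of_lt_succ fun k => hn1 k (S k)
  obtain ⟨j, hj⟩ := exists_limit (fun k => (H k : Set G)) (fun a b hab => hmono hab) hdense
    (fun k => (S k).J) (fun k x => (S k).norm x) (fun k x hx => hn3 k (S k) x hx)
  have hBd : Dense (⋃ k, (B (S k).σ.m : Set A)) := by
    refine hF.dense.mono (Set.iUnion_subset fun k => ?_)
    exact fun x hx => Set.mem_iUnion.2 ⟨k, hF.mono (hm.le_apply (x := k)) hx⟩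
  obtain ⟨r, hr⟩ := exists_limit (fun k => (B (S k).σ.m : Set A))
    (fun a b hab => hF.mono (hm.monotone hab)) hBd
    (fun k => (S k).σ.R) (fun k x => (S k).good.R_norm x) (fun k x hx => hn2 k (S k) x hx)
  refine ⟨r, j, fun x => ?_⟩
  have : (fun x => r (j x)) = id := by
    refine Continuous.ext_on hdense (by fun_prop) continuous_id ?_
    intro x hx
    obtain ⟨k, hk⟩ := Set.mem_iUnion.1 hx
    change r (j x) = x
    rw [hj k x hk, hr k _ ((S k).mem x), (S k).good.R_congr ((S k).left x), (S k).good.R_Th hk]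
  exact congrFun this x

end limit

section pel

open Filter Topology ZeroAtInfty

variable {A : Type*} [NormedAddCommGroup A] [NormedSpace ℂ A]

theorem c0_tendsto (f : C₀(ℕ, A)) : Tendsto f atTop (𝓝 0) := by
  have := f.zero_at_infty'
  rwa [Filter.cocompact_eq_cofinite, Nat.cofinite_eq_atTop] at this

/-- null sequences as elements of `C₀`. -/
def mk0 (f : ℕ → A) (h : Tendsto f atTop (𝓝 0)) : C₀(ℕ, A) where
  toFun := f
  continuous_toFun := continuous_of_discreteTopology
  zero_at_infty' := by rwa [Filter.cocompact_eq_cofinite, Nat.cofinite_eq_atTop]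

@[simp] theorem mk0_apply (f : ℕ → A) (h : Tendsto f atTop (𝓝 0)) (n : ℕ) : mk0 f h n = f n := rfl

theorem c0_norm_le {f : C₀(ℕ, A)} {M : ℝ} (hM : 0 ≤ M) (h : ∀ n, ‖f n‖ ≤ M) : ‖f‖ ≤ M := by
  rw [← ZeroAtInftyContinuousMap.norm_toBCF_eq_norm]
  exact (BoundedContinuousFunction.norm_le hM).2 h

theorem c0_apply_le (f : C₀(ℕ, A)) (n : ℕ) : ‖f n‖ ≤ ‖f‖ := by
  rw [← ZeroAtInftyContinuousMap.norm_toBCF_eq_norm]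
  exact f.toBCF.norm_coe_le_norm n

/-- evaluation -/
noncomputable def ev0 (n : ℕ) : C₀(ℕ, A) →L[ℂ] A :=
  LinearMap.mkContinuous ⟨⟨fun f => f n, fun _ _ => rfl⟩, fun _ _ => rfl⟩ 1
    (fun f => by simpa using c0_apply_le f n)

/-- composition with an injection -/
noncomputable def cp (φ : ℕ → ℕ) (hφ : Function.Injective φ) : C₀(ℕ, A) →L[ℂ] C₀(ℕ, A) :=
  LinearMap.mkContinuous
    ⟨⟨fun f => mk0 (fun n => f (φ n)) ((c0_tendsto f).comp hφ.nat_tendsto_atTop),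
      fun _ _ => rfl⟩, fun _ _ => rfl⟩ 1
    (fun f => by
      rw [one_mul]
      exact c0_norm_le (norm_nonneg _) fun n => c0_apply_le f (φ n))

theorem ev0_apply (n : ℕ) (f : C₀(ℕ, A)) : ev0 n f = f n := rfl
theorem cp_apply (φ : ℕ → ℕ) (hφ : Function.Injective φ) (f : C₀(ℕ, A)) (n : ℕ) :
    cp φ hφ f n = f (φ n) := rfl

variable [CompleteSpace A]

theorem c0_shift : Nonempty (C₀(ℕ, A) ≃L[ℂ] A × C₀(ℕ, A)) := by
  let T : C₀(ℕ, A) →L[ℂ] A × C₀(ℕ, A) :=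
    (ev0 0).prod (cp (fun n => n + 1) (fun a b h => by simpa using h))
  refine ⟨ContinuousLinearEquiv.ofBijective T ?_ ?_⟩
  · rw [LinearMap.ker_eq_bot']
    intro f hf
    have h1 : f 0 = 0 := congrArg Prod.fst hf
    have h2 : ∀ n, f (n + 1) = 0 := fun n => DFunLike.congr_fun (congrArg Prod.snd hf) n
    ext n
    cases n with
    | zero => exact h1
    | succ n => exact h2 n
  · rw [LinearMap.range_eq_top]
    rintro ⟨a, g⟩
    refine ⟨mk0 (fun n => Nat.casesOn n a (fun n => g n)) ?_, ?_⟩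
    · rw [← tendsto_add_atTop_iff_nat 1]
      exact c0_tendsto g
    · refine Prod.ext rfl ?_
      ext n
      rfl

theorem c0_prod : Nonempty (C₀(ℕ, A) ≃L[ℂ] C₀(ℕ, A) × C₀(ℕ, A)) := by
  let T : C₀(ℕ, A) →L[ℂ] C₀(ℕ, A) × C₀(ℕ, A) :=
    (cp (fun n => 2 * n) (fun a b h => by simpa using h)).prod
      (cp (fun n => 2 * n + 1) (fun a b h => by simpa using h))
  refine ⟨ContinuousLinearEquiv.ofBijective T ?_ ?_⟩
  · rw [LinearMap.ker_eq_bot']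
    intro f hf
    have h1 : ∀ n, f (2 * n) = 0 := fun n => DFunLike.congr_fun (congrArg Prod.fst hf) n
    have h2 : ∀ n, f (2 * n + 1) = 0 := fun n => DFunLike.congr_fun (congrArg Prod.snd hf) n
    ext n
    rcases Nat.even_or_odd' n with ⟨k, rfl | rfl⟩
    · exact h1 k
    · exact h2 k
  · rw [LinearMap.range_eq_top]
    rintro ⟨f, g⟩
    refine ⟨mk0 (fun n => if n % 2 = 0 then f (n / 2) else g (n / 2)) ?_, ?_⟩
    · have hd : Tendsto (fun n : ℕ => n / 2) atTop atTop :=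
        Nat.tendsto_div_const_atTop (by norm_num)
      have hf := (c0_tendsto f).comp hd
      have hg := (c0_tendsto g).comp hd
      exact Tendsto.if' hf hg
    · refine Prod.ext ?_ ?_
      · ext n
        change (if (2 * n) % 2 = 0 then f (2 * n / 2) else g (2 * n / 2)) = f n
        rw [if_pos (by omega)]; congr 1; omega
      · ext n
        change (if (2 * n + 1) % 2 = 0 then f ((2 * n + 1) / 2) else g ((2 * n + 1) / 2)) = g n
        rw [if_neg (by omega)]; congr 1; omega

/-- Decomposition method. -/
theorem pelczynski (ρ : A →L[ℂ] C₀(ℕ, A)) (i : C₀(ℕ, A) →L[ℂ] A) (h : ∀ x, ρ (i x) = x) :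
    Nonempty (A ≃L[ℂ] C₀(ℕ, A)) := by
  obtain ⟨sh⟩ := c0_shift (A := A)
  obtain ⟨pr⟩ := c0_prod (A := A)
  let e := ContinuousLinearEquiv.equivOfRightInverse ρ i h
  exact ⟨(((e.trans (pr.prodCongr (.refl ℂ _))).trans (.prodAssoc ℂ _ _ _)).trans
    ((ContinuousLinearEquiv.refl ℂ _).prodCongr e.symm)).trans
    ((ContinuousLinearEquiv.prodComm ℂ _ _).trans sh.symm)⟩

end pel

section unit

open Filter Topology ZeroAtInfty

variable {A : Type*} [NonUnitalCStarAlgebra A]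

/-- The filtration of the unitization of `C₀(ℕ, A)`. -/
noncomputable def HH (S : ℕ → NonUnitalStarSubalgebra ℂ A) (k : ℕ) :
    NonUnitalStarSubalgebra ℂ (Unitization ℂ C₀(ℕ, A)) where
  carrier := {x | (∀ n, x.snd n ∈ S k) ∧ ∀ n, k ≤ n → x.snd n = 0}
  zero_mem' := ⟨fun n => zero_mem _, fun n _ => rfl⟩
  add_mem' {x y} hx hy := by
    refine ⟨fun n => ?_, fun n hn => ?_⟩
    · rw [Unitization.snd_add, ZeroAtInftyContinuousMap.add_apply]
      exact add_mem (hx.1 n) (hy.1 n)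
    · rw [Unitization.snd_add, ZeroAtInftyContinuousMap.add_apply, hx.2 n hn, hy.2 n hn, add_zero]
  smul_mem' c x hx := by
    refine ⟨fun n => ?_, fun n hn => ?_⟩
    · rw [Unitization.snd_smul, ZeroAtInftyContinuousMap.smul_apply]
      exact SMulMemClass.smul_mem c (hx.1 n)
    · rw [Unitization.snd_smul, ZeroAtInftyContinuousMap.smul_apply, hx.2 n hn, smul_zero]
  mul_mem' {x y} hx hy := by
    refine ⟨fun n => ?_, fun n hn => ?_⟩
    · rw [Unitization.snd_mul, ZeroAtInftyContinuousMap.add_apply,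
        ZeroAtInftyContinuousMap.add_apply, ZeroAtInftyContinuousMap.smul_apply,
        ZeroAtInftyContinuousMap.smul_apply, ZeroAtInftyContinuousMap.mul_apply]
      exact add_mem (add_mem (SMulMemClass.smul_mem _ (hy.1 n)) (SMulMemClass.smul_mem _ (hx.1 n)))
        (mul_mem (hx.1 n) (hy.1 n))
    · rw [Unitization.snd_mul, ZeroAtInftyContinuousMap.add_apply,
        ZeroAtInftyContinuousMap.add_apply, ZeroAtInftyContinuousMap.smul_apply,
        ZeroAtInftyContinuousMap.smul_apply, ZeroAtInftyContinuousMap.mul_apply,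
        hx.2 n hn, hy.2 n hn]
      simp
  star_mem' {x} hx := by
    refine ⟨fun n => ?_, fun n hn => ?_⟩
    · rw [Unitization.snd_star, ZeroAtInftyContinuousMap.star_apply]
      exact star_mem (hx.1 n)
    · rw [Unitization.snd_star, ZeroAtInftyContinuousMap.star_apply, hx.2 n hn, star_zero]

theorem mem_HH {S : ℕ → NonUnitalStarSubalgebra ℂ A} {k : ℕ} {x : Unitization ℂ C₀(ℕ, A)} :
    x ∈ HH S k ↔ (∀ n, x.snd n ∈ S k) ∧ ∀ n, k ≤ n → x.snd n = 0 := Iff.rfl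

variable {S : ℕ → NonUnitalStarSubalgebra ℂ A}

theorem HH_mono (hS : Monotone S) : Monotone (HH S) := fun _ _ hab _ hx =>
  ⟨fun n => hS hab (hx.1 n), fun n hn => hx.2 n (hab.trans hn)⟩

theorem HH_fd (hS : ∀ k, FiniteDimensional ℂ (S k)) (k : ℕ) : FiniteDimensional ℂ (HH S k) := by
  have := hS k
  let T : HH S k →ₗ[ℂ] ℂ × (Fin k → S k) :=
    { toFun := fun x => (x.1.fst, fun n => ⟨x.1.snd n, x.2.1 n⟩)
      map_add' := fun x y => rfl
      map_smul' := fun c x => rfl }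
  refine Module.Finite.of_injective T ?_
  intro x y hxy
  have h1 : x.1.fst = y.1.fst := congrArg (fun z => z.1) hxy
  have h2 := congrArg (fun z => z.2) hxy
  apply Subtype.ext
  refine Unitization.ext h1 ?_
  ext n
  by_cases hn : n < k
  · exact congrArg Subtype.val (congrFun h2 ⟨n, hn⟩)
  · rw [x.2.2 n (not_lt.1 hn), y.2.2 n (not_lt.1 hn)]

theorem HH_dense (hS : Monotone S) (hd : Dense (⋃ k, (S k : Set A))) :
    Dense (⋃ k, (HH S k : Set (Unitization ℂ C₀(ℕ, A)))) := by
  rw [Metric.dense_iff]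
  intro x ε hε
  have hx := Metric.tendsto_atTop.1 (c0_tendsto x.snd) (ε / 2) (by positivity)
  obtain ⟨N, hN⟩ := hx
  have hc : ∀ n, ∃ k, ∃ a ∈ S k, ‖a - x.snd n‖ < ε / 2 := by
    intro n
    obtain ⟨a, ha, ha'⟩ := Metric.dense_iff.1 hd (x.snd n) (ε / 2) (by positivity)
    obtain ⟨k, hk⟩ := Set.mem_iUnion.1 ha'
    exact ⟨k, a, hk, by simpa [dist_eq_norm] using ha⟩
  choose kk a ha han using hc
  let K := N + ∑ n ∈ Finset.range N, kk n
  let g : C₀(ℕ, A) := mk0 (fun n => if n < N then a n else 0) (by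
    refine tendsto_const_nhds.congr' ?_
    filter_upwards [eventually_ge_atTop N] with n hn
    rw [if_neg (not_lt.2 hn)])
  have hg : ∀ n, g n = if n < N then a n else 0 := fun n => rfl
  let y : Unitization ℂ C₀(ℕ, A) := x + Unitization.inr (g - x.snd)
  have hy : y.snd = g := by
    rw [Unitization.snd_add, Unitization.snd_inr]
    abel
  refine ⟨y, ?_, Set.mem_iUnion.2 ⟨K, ?_, ?_⟩⟩
  · rw [Metric.mem_ball, dist_eq_norm]
    have : y - x = Unitization.inr (g - x.snd) := by simp [y]
    rw [this, Unitization.norm_inr]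
    refine lt_of_le_of_lt (c0_norm_le (M := ε / 2) (by positivity) fun n => ?_) (by linarith)
    rw [ZeroAtInftyContinuousMap.sub_apply, hg]
    split_ifs with hn
    · exact (han n).le
    · have := hN n (not_lt.1 hn)
      rw [dist_zero_right] at this
      rw [zero_sub, norm_neg]
      exact this.le
  · intro n
    rw [hy, hg]
    split_ifs with hn
    · refine hS ?_ (ha n)
      exact (Finset.single_le_sum (f := kk) (fun _ _ => Nat.zero_le _)
        (Finset.mem_range.2 hn)).trans (Nat.le_add_left _ _)
    · exact zero_mem _
  · intro n hn
    have : N ≤ n := (Nat.le_add_right _ _).trans hn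
    rw [hy, hg, if_neg (not_lt.2 this)]

theorem main_retract {B : ℕ → NonUnitalStarSubalgebra ℂ A} {P : ℕ → A → Prop}
    (hF : FermData B P) :
    ∃ (ρ : A →L[ℂ] C₀(ℕ, A)) (i : C₀(ℕ, A) →L[ℂ] A), ∀ x, ρ (i x) = x := by
  obtain ⟨r, j, h⟩ := exists_retract (G := Unitization ℂ C₀(ℕ, A)) (H := HH B) hF
    (HH_mono hF.mono) (HH_fd hF.fd) (HH_dense hF.mono hF.dense)
    ⟨fun n => zero_mem _, fun n _ => rfl⟩ (by
      intro a ha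
      refine ⟨a.fst, Unitization.ext ?_ ?_⟩
      · simp
      · ext n
        rw [ha.2 n (Nat.zero_le n)]
        simp)
  let sndL : Unitization ℂ C₀(ℕ, A) →L[ℂ] C₀(ℕ, A) :=
    ⟨⟨⟨fun x => x.snd, fun _ _ => rfl⟩, fun _ _ => rfl⟩, Unitization.continuous_snd⟩
  let inrL : C₀(ℕ, A) →L[ℂ] Unitization ℂ C₀(ℕ, A) :=
    ⟨⟨⟨fun x => Unitization.inr x, fun _ _ => Unitization.inr_add _ _ _⟩,
      fun _ _ => Unitization.inr_smul _ _ _⟩, Unitization.continuous_inr⟩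
  refine ⟨sndL.comp r, j.comp inrL, fun x => ?_⟩
  change (r (j (Unitization.inr x))).snd = x
  rw [h]
  rfl

end unit

end Ferm

theorem fermion_presentation_linearly_homeomorphic_c0
    (A : Type*) [NonUnitalCStarAlgebra A]
    (hA : ∃ SA : ℕ → NonUnitalStarSubalgebra ℂ A,
      IsAFPresentation A SA ∧ HasFermionProperty A SA) :
    Nonempty (A ≃L[ℂ] ZeroAtInftyContinuousMap ℕ A) := by
  obtain ⟨SA, h1, h2⟩ := hA
  obtain ⟨B, P, hF⟩ := Ferm.fermData_of h1 h2
  obtain ⟨ρ, i, h⟩ := Ferm.main_retract hF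
  exact Ferm.pelczynski ρ i h
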